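/- arXiv:2003.02521 — 4 statements merged into one kernel-verified Lean document; each statement's English description precedes it below -/
import Mathlib

section
/- (ACQ Preservation) Let I and I' be instances, n ∈ ℕ, and q a Boolean acyclic conjunctive query (ACQ) with |q| ≤ n. If I ⊨ q and there exists an n-bounded simulation from I to I', then I' ⊨ q. -/
namespace FQA

/-- A relational signature: a finite set of relation names, each with an arity `≥ 1`. -/
structure Sig where
  Rel : Type
  rel_fin : Finite Rel
  ar : Rel → ℕ
  ar_pos : ∀ R, 1 ≤ ar R

/-- The positions of a signature: pairs of a relation and an index into its arity. -/
abbrev Sig.Pos (σ : Sig) : Type := Σ R : σ.Rel, Fin (σ.ar R)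

/-- A fact `R(a₁, …, a_{ar R})` with elements from `α`. -/
abbrev Fact (σ : Sig) (α : Type) : Type := Σ R : σ.Rel, Fin (σ.ar R) → α

/-- An instance is a set of facts. -/
abbrev Inst (σ : Sig) (α : Type) : Type := Set (Fact σ α)

variable {σ : Sig} {α β : Type}

/-- Element `a` occurs at position `p` in some fact of the instance `I`. -/
def occursAt (I : Inst σ α) (p : σ.Pos) (a : α) : Prop :=
  ∃ t : Fin (σ.ar p.1) → α, (⟨p.1, t⟩ : Fact σ α) ∈ I ∧ t p.2 = a

/-- The active domain of an instance: the elements occurring in some fact. -/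
def activeDom (I : Inst σ α) : Set α :=
  {a | ∃ F : Fact σ α, F ∈ I ∧ ∃ i, F.2 i = a}

/-- A Boolean conjunctive query: existentially quantified variables `Fin nv` and a
conjunction (list) of constant-free atoms, in which every variable occurs. -/
structure CQ (σ : Sig) where
  nv : ℕ
  atoms : List (Fact σ (Fin nv))
  vars_occur : ∀ x : Fin nv, ∃ A ∈ atoms, ∃ i, A.2 i = x

/-- The size of a CQ: its number of atoms. -/
def CQ.size (q : CQ σ) : ℕ := q.atoms.length

/-- A Boolean CQ holds in an instance iff there is a homomorphism (a match) from its
atoms to facts of the instance. -/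
def satCQ (I : Inst σ α) (q : CQ σ) : Prop :=
  ∃ h : Fin q.nv → α, ∀ A ∈ q.atoms, (⟨A.1, fun i => h (A.2 i)⟩ : Fact σ α) ∈ I

/-- A Berge cycle of a CQ: `m + 2 ≥ 2` pairwise distinct atom occurrences and pairwise
distinct variables, cyclically incident. -/
def HasBergeCycle (q : CQ σ) : Prop :=
  ∃ m : ℕ, ∃ A : Fin (m + 2) → Fin q.atoms.length, Function.Injective A ∧
    ∃ x : Fin (m + 2) → Fin q.nv, Function.Injective x ∧
      ∀ i : Fin (m + 2),
        (∃ a, (q.atoms.get (A i)).2 a = x i) ∧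
        (∃ a, (q.atoms.get (A (i + 1))).2 a = x i)

/-- An acyclic CQ (ACQ): no Berge cycle and no variable occurring twice in one atom. -/
def IsACQ (q : CQ σ) : Prop :=
  ¬ HasBergeCycle q ∧ ∀ A ∈ q.atoms, Function.Injective A.2

/-- The bounded simulation relation `(I, a) ≤_n (J, b)`: it always holds for `n = 0`,
and for `n + 1` it holds iff every fact of `I` containing `a` at some position has a
witnessing fact of `J` containing `b` at that position whose elements are pairwise
`≤_n`-related to those of the original fact. -/
def bsim (I : Inst σ α) (J : Inst σ β) : ℕ → α → β → Prop
  | 0, _, _ => True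
  | n + 1, a, b =>
      ∀ (R : σ.Rel) (t : Fin (σ.ar R) → α) (p : Fin (σ.ar R)),
        (⟨R, t⟩ : Fact σ α) ∈ I → t p = a →
        ∃ u : Fin (σ.ar R) → β, (⟨R, u⟩ : Fact σ β) ∈ J ∧ u p = b ∧
          ∀ q : Fin (σ.ar R), bsim I J n (t q) (u q)

theorem bsim_mono (I : Inst σ α) (J : Inst σ β) :
    ∀ (n : ℕ) (a : α) (b : β), bsim I J (n + 1) a b → bsim I J n a b
  | 0, _, _, _ => trivial
  | n + 1, a, b, h => by
    intro R t p ht hp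
    obtain ⟨u, hu, hup, hq⟩ := h R t p ht hp
    exact ⟨u, hu, hup, fun q => bsim_mono I J n _ _ (hq q)⟩

theorem window_cycle (q : CQ σ) (A : ℕ → Fin q.atoms.length) (x : ℕ → Fin q.nv)
    (h1 : ∀ i, ∃ a, (q.atoms.get (A i)).2 a = x i)
    (h2 : ∀ i, ∃ a, (q.atoms.get (A (i + 1))).2 a = x i)
    (m s : ℕ)
    (hA : ∀ i j, i < j → j < i + (m + 2) → A i ≠ A j)
    (hx : ∀ i j, i < j → j < i + (m + 2) → x i ≠ x j)
    (hl : ∃ a, (q.atoms.get (A s)).2 a = x (s + (m + 1))) : HasBergeCycle q := by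
  refine ⟨m, fun i => A (s + i.val), ?_, fun i => x (s + i.val), ?_, ?_⟩
  · intro i j hij
    by_contra hne
    have hne' : i.val ≠ j.val := fun h => hne (Fin.ext h)
    rcases Nat.lt_or_gt_of_ne hne' with h | h
    · exact hA _ _ (by omega) (by omega) hij
    · exact hA _ _ (by omega) (by omega) hij.symm
  · intro i j hij
    by_contra hne
    have hne' : i.val ≠ j.val := fun h => hne (Fin.ext h)
    rcases Nat.lt_or_gt_of_ne hne' with h | h
    · exact hx _ _ (by omega) (by omega) hij
    · exact hx _ _ (by omega) (by omega) hij.symm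
  · intro i
    refine ⟨h1 _, ?_⟩
    by_cases hi : i = Fin.last (m + 1)
    · subst hi
      have e : s + (Fin.last (m + 1) + 1).val = s := by simp [Fin.last_add_one]
      change ∃ a, (q.atoms.get (A (s + (Fin.last (m + 1) + 1).val))).2 a = x (s + (m + 1))
      rw [e]
      exact hl
    · have hv : (i + 1).val = i.val + 1 := Fin.val_add_one_of_lt (Fin.lt_last_iff_ne_last.2 hi)
      have := h2 (s + i.val)
      change ∃ a, (q.atoms.get (A (s + (i + 1).val))).2 a = x (s + i.val)
      rw [hv]
      exact this

theorem exists_leaf (q : CQ σ) (hc : ¬ HasBergeCycle q) (T : Finset (Fin q.atoms.length))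
    (hT : T.Nonempty) :
    ∃ A ∈ T, ∀ i j, (∃ B ∈ T, B ≠ A ∧ ∃ b, (q.atoms.get B).2 b = (q.atoms.get A).2 i) →
      (∃ B ∈ T, B ≠ A ∧ ∃ b, (q.atoms.get B).2 b = (q.atoms.get A).2 j) →
      (q.atoms.get A).2 i = (q.atoms.get A).2 j := by
  by_contra hcon
  push Not at hcon
  let P : Fin q.atoms.length × Fin q.nv → Prop := fun p =>
    p.1 ∈ T ∧ (∃ a, (q.atoms.get p.1).2 a = p.2) ∧
      ∃ B ∈ T, B ≠ p.1 ∧ ∃ b, (q.atoms.get B).2 b = p.2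
  have step : ∀ p : Subtype P, ∃ p' : Subtype P, p'.1.1 ≠ p.1.1 ∧ p'.1.2 ≠ p.1.2 ∧
      ∃ a, (q.atoms.get p'.1.1).2 a = p.1.2 := by
    rintro ⟨⟨A, x⟩, hA, ha, B, hB, hBA, hb⟩
    obtain ⟨i, j, hi, hj, hij⟩ := hcon B hB
    by_cases h : (q.atoms.get B).2 i = x
    · exact ⟨⟨⟨B, (q.atoms.get B).2 j⟩, hB, ⟨j, rfl⟩, hj⟩, hBA, fun h' => hij (h.trans h'.symm), hb⟩
    · exact ⟨⟨⟨B, (q.atoms.get B).2 i⟩, hB, ⟨i, rfl⟩, hi⟩, hBA, h, hb⟩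
  choose nx hn1 hn2 hn3 using step
  obtain ⟨A0, hA0⟩ := hT
  obtain ⟨i0, j0, hi0, -, -⟩ := hcon A0 hA0
  let p0 : Subtype P := ⟨⟨A0, (q.atoms.get A0).2 i0⟩, hA0, ⟨i0, rfl⟩, hi0⟩
  let s : ℕ → Subtype P := fun k => nx^[k] p0
  have hs : ∀ k, s (k + 1) = nx (s k) := fun k => Function.iterate_succ_apply' nx k p0
  let A : ℕ → Fin q.atoms.length := fun k => (s k).1.1
  let x : ℕ → Fin q.nv := fun k => (s k).1.2
  have h1 : ∀ i, ∃ a, (q.atoms.get (A i)).2 a = x i := fun i => (s i).2.2.1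
  have h2 : ∀ i, ∃ a, (q.atoms.get (A (i + 1))).2 a = x i := fun i => by
    have e : A (i + 1) = (nx (s i)).1.1 := by simp only [A, hs]
    rw [e]; exact hn3 (s i)
  have h3 : ∀ i, A (i + 1) ≠ A i := fun i => by
    simp only [A, hs]; exact hn1 (s i)
  have h4 : ∀ i, x (i + 1) ≠ x i := fun i => by
    simp only [x, hs]; exact hn2 (s i)
  have hex : ∃ d, 0 < d ∧ ∃ a, A a = A (a + d) ∨ x a = x (a + d) := by
    obtain ⟨i, j, hne, hij⟩ := Finite.exists_ne_map_eq_of_infinite A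
    rcases Nat.lt_or_gt_of_ne hne with h | h
    · exact ⟨j - i, by omega, i, Or.inl (by rw [hij]; congr 1; omega)⟩
    · exact ⟨i - j, by omega, j, Or.inl (by rw [← hij]; congr 1; omega)⟩
  classical
  obtain ⟨hd0, a, ha⟩ := Nat.find_spec hex
  have hmin := fun k => @Nat.find_min _ _ hex k
  generalize Nat.find hex = d at *
  have hd1 : d ≠ 1 := by
    rintro rfl
    rcases ha with ha | ha
    · exact h3 a ha.symm
    · exact h4 a ha.symm
  obtain ⟨m, rfl⟩ : ∃ m, d = m + 2 := ⟨d - 2, by omega⟩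
  have hA : ∀ i j, i < j → j < i + (m + 2) → A i ≠ A j := fun i j hi hj he =>
    hmin (j - i) (by omega) ⟨by omega, i, Or.inl (by rw [he]; congr 1; omega)⟩
  have hx : ∀ i j, i < j → j < i + (m + 2) → x i ≠ x j := fun i j hi hj he =>
    hmin (j - i) (by omega) ⟨by omega, i, Or.inr (by rw [he]; congr 1; omega)⟩
  rcases ha with ha | ha
  · refine hc (window_cycle q A x h1 h2 m a hA hx ?_)
    rw [ha]; exact h2 (a + (m + 1))
  · refine hc (window_cycle q A x h1 h2 m (a + 1) hA hx ?_)
    have := h2 a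
    rw [ha] at this
    rw [show a + 1 + (m + 1) = a + (m + 2) by omega]
    exact this

theorem partial_match (I : Inst σ α) (I' : Inst σ β) (n : ℕ)
    (q : CQ σ) (hacq : IsACQ q) (hsz : q.size ≤ n) (h : Fin q.nv → α)
    (hh : ∀ A ∈ q.atoms, (⟨A.1, fun i => h (A.2 i)⟩ : Fact σ α) ∈ I)
    (g0 : Fin q.nv → β) (hg0 : ∀ x, bsim I I' n (h x) (g0 x)) :
    ∀ (c : ℕ) (T : Finset (Fin q.atoms.length)), T.card = c →
      ∃ g : Fin q.nv → β, (∀ x, bsim I I' (n - c) (h x) (g x)) ∧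
        ∀ B ∈ T, (⟨(q.atoms.get B).1, fun i => g ((q.atoms.get B).2 i)⟩ : Fact σ β) ∈ I' := by
  classical
  intro c
  induction c with
  | zero =>
    intro T hT
    rw [Finset.card_eq_zero] at hT
    subst hT
    exact ⟨g0, hg0, by simp⟩
  | succ c ih =>
    intro T hT
    obtain ⟨A, hAT, hleaf⟩ := exists_leaf q hacq.1 T (Finset.card_pos.1 (by omega))
    obtain ⟨g, hg, hgT⟩ := ih (T.erase A) (by rw [Finset.card_erase_of_mem hAT]; omega)
    have hcn : c + 1 ≤ n := by
      have := T.card_le_univ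
      rw [Fintype.card_fin] at this
      unfold CQ.size at hsz
      omega
    have hmem : q.atoms.get A ∈ q.atoms := List.get_mem _ _
    have hinj : Function.Injective (q.atoms.get A).2 := hacq.2 _ hmem
    obtain ⟨p, hp⟩ : ∃ p, ∀ i, i ≠ p →
        ¬ ∃ B ∈ T, B ≠ A ∧ ∃ b, (q.atoms.get B).2 b = (q.atoms.get A).2 i := by
      by_cases hsh : ∃ p, ∃ B ∈ T, B ≠ A ∧ ∃ b, (q.atoms.get B).2 b = (q.atoms.get A).2 p
      · obtain ⟨p, hp⟩ := hsh
        exact ⟨p, fun i hi hi' => hi (hinj (hleaf i p hi' hp))⟩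
      · exact ⟨⟨0, σ.ar_pos _⟩, fun i _ hi' => hsh ⟨i, hi'⟩⟩
    have hb := hg ((q.atoms.get A).2 p)
    rw [show n - c = n - (c + 1) + 1 by omega] at hb
    obtain ⟨u, hu, hup, hur⟩ := hb _ _ p (hh _ hmem) rfl
    refine ⟨Function.extend (q.atoms.get A).2 u g, ?_, ?_⟩
    · intro x
      by_cases hx : ∃ i, (q.atoms.get A).2 i = x
      · obtain ⟨i, rfl⟩ := hx
        rw [hinj.extend_apply]
        exact hur i
      · rw [Function.extend_apply' _ _ _ hx]
        apply bsim_mono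
        rw [show n - (c + 1) + 1 = n - c by omega]
        exact hg x
    · intro B hB
      by_cases hBA : B = A
      · subst hBA
        simp only [hinj.extend_apply]
        exact hu
      · have key : ∀ b, Function.extend (q.atoms.get A).2 u g ((q.atoms.get B).2 b)
            = g ((q.atoms.get B).2 b) := by
          intro b
          by_cases hx : ∃ i, (q.atoms.get A).2 i = (q.atoms.get B).2 b
          · obtain ⟨i, hi⟩ := hx
            have hip : i = p := by
              by_contra hne
              exact hp i hne ⟨B, hB, hBA, b, hi.symm⟩
            subst hip
            rw [← hi, hinj.extend_apply, hup]
          · rw [Function.extend_apply' _ _ _ hx]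
        simp only [key]
        exact hgT B (Finset.mem_erase.2 ⟨hBA, hB⟩)

/-- **ACQ Preservation.** If a Boolean acyclic CQ `q` of size at most `n` holds in
`I`, and there is an `n`-bounded simulation from `I` to `I'`, then `q` holds in `I'`. -/
theorem acq_preservation
    {σ : Sig} (I I' : Inst σ ℕ) (n : ℕ)
    (q : CQ σ) (hacq : IsACQ q) (hsz : q.size ≤ n)
    (hq : satCQ I q)
    (f : ℕ → ℕ) (hf : ∀ a ∈ activeDom I, bsim I I' n a (f a)) :
    satCQ I' q := by
  obtain ⟨h, hh⟩ := hq
  obtain ⟨g, -, hg⟩ := partial_match I I' n q hacq hsz h hh (fun x => f (h x))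
    (fun x => by
      obtain ⟨A, hA, i, hi⟩ := q.vars_occur x
      exact hf _ ⟨_, hh A hA, i, by simp only [hi]⟩) _ Finset.univ rfl
  refine ⟨g, fun A hA => ?_⟩
  obtain ⟨k, rfl⟩ := List.get_of_mem hA
  exact hg k (Finset.mem_univ _)

end FQA
end

section
/- (Pointed query normal form) For any connected Boolean acyclic conjunctive query (ACQ) q and any variable x of q, there exists a pointed query q' with free variable x whose total number of atoms equals |q|, such that for every instance I, I ⊨ q if and only if I ⊨ ∃x q'(x). -/
namespace FQA

variable {σ : Sig} {α β : Type}

/-- `q` is connected: its atoms cannot be partitioned into two nonempty sets sharing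
no variable. -/
def Connected (q : CQ σ) : Prop :=
  ∀ S : Set (Fin q.atoms.length), S.Nonempty → Sᶜ.Nonempty →
    ∃ i ∈ S, ∃ j ∈ Sᶜ, ∃ x : Fin q.nv,
      (∃ a, (q.atoms.get i).2 a = x) ∧ (∃ a, (q.atoms.get j).2 a = x)

/-- Pointed queries with one (implicit) free variable: either the empty, tautological
query, or a conjunction of branches `∃ ȳ (A(x, ȳ) ∧ ⋀ⱼ qⱼ(yⱼ))`, where the branch
`PQ.cons R p sub rest` stands for an `R`-atom with the free variable at position `p`,
fresh pairwise distinct variables at the other positions, a pointed subquery `sub i`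
attached to the variable at each position `i ≠ p`, and further branches `rest`. -/
inductive PQ (σ : Sig) : Type
  | nil : PQ σ
  | cons (R : σ.Rel) (p : Fin (σ.ar R)) (sub : Fin (σ.ar R) → PQ σ) (rest : PQ σ) : PQ σ

/-- The size of a pointed query: its total number of atoms, including subqueries
(subqueries attached at the distinguished position `p` are ignored). -/
def PQ.size {σ : Sig} : PQ σ → ℕ
  | .nil => 0
  | .cons R p sub rest =>
      1 + (∑ i : Fin (σ.ar R), if i = p then 0 else (sub i).size) + rest.size

/-- Satisfaction of a pointed query at an element `a` of an instance. -/
def PQ.sat {σ : Sig} (I : Inst σ ℕ) : PQ σ → ℕ → Prop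
  | .nil, _ => True
  | .cons R p sub rest, a =>
      (∃ t : Fin (σ.ar R) → ℕ, (⟨R, t⟩ : Fact σ ℕ) ∈ I ∧ t p = a ∧
        ∀ i : Fin (σ.ar R), i ≠ p → PQ.sat I (sub i) (t i)) ∧ PQ.sat I rest a

def inc (q : CQ σ) (B : Fin q.atoms.length) (v : Fin q.nv) : Prop :=
  ∃ a, (q.atoms.get B).2 a = v

def step (q : CQ σ) (S : Finset (Fin q.atoms.length)) (v w : Fin q.nv) : Prop :=
  ∃ B ∈ S, inc q B v ∧ inc q B w

abbrev reach (q : CQ σ) (S : Finset (Fin q.atoms.length)) : Fin q.nv → Fin q.nv → Prop :=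
  Relation.ReflTransGen (step q S)

theorem step_symm (q : CQ σ) (S) : Symmetric (step q S) := by
  rintro v w ⟨B, hB, h1, h2⟩
  exact ⟨B, hB, h2, h1⟩

theorem reach_symm (q : CQ σ) (S) {v w} (h : reach q S v w) : reach q S w v := by
  induction h with
  | refl => exact .refl
  | tail _ hs ih => exact .head (step_symm q S hs) ih

def chain (q : CQ σ) (S : Finset (Fin q.atoms.length)) (y y' : Fin q.nv) (n : ℕ) : Prop :=
  ∃ (v : ℕ → Fin q.nv) (B : ℕ → Fin q.atoms.length), v 0 = y ∧ v n = y' ∧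
    ∀ k < n, B k ∈ S ∧ inc q (B k) (v k) ∧ inc q (B k) (v (k + 1))

theorem chain_of_reach (q : CQ σ) (S) {y y'} (hne : y ≠ y') (h : reach q S y y') :
    ∃ n, chain q S y y' n := by
  have hB : Nonempty (Fin q.atoms.length) := by
    obtain ⟨A, hA, _⟩ := q.vars_occur y
    exact ⟨⟨0, List.length_pos_of_mem hA⟩⟩
  clear hne
  induction h with
  | refl => exact ⟨0, fun _ => y, fun _ => hB.some, rfl, rfl, by simp⟩
  | @tail b c _ hs ih =>
    obtain ⟨n, v, B, h0, hn, hk⟩ := ih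
    obtain ⟨C, hC, h1, h2⟩ := hs
    refine ⟨n + 1, fun k => if k ≤ n then v k else c, fun k => if k < n then B k else C,
      by simpa using h0, by simp, ?_⟩
    intro k hkn
    by_cases hkn' : k < n
    · have := hk k hkn'
      have h3 : k ≤ n := hkn'.le
      have h4 : k + 1 ≤ n := hkn'
      simp only [hkn', h3, h4, if_true]
      exact this
    · obtain rfl : k = n := by omega
      simp only [lt_irrefl, le_refl, if_true, if_false, show ¬ (k + 1 ≤ k) by omega]
      exact ⟨hC, hn ▸ h1, h2⟩

theorem cycle_of_reach (q : CQ σ) (S) (A : Fin q.atoms.length) (hA : A ∉ S) {y y'}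
    (hne : y ≠ y') (hy : inc q A y) (hy' : inc q A y') (h : reach q S y y') :
    HasBergeCycle q := by
  classical
  have hex := chain_of_reach q S hne h
  have hmin : ∀ m < Nat.find hex, ¬ chain q S y y' m := fun m hm => Nat.find_min hex hm
  obtain ⟨v, B, h0, hn, hk⟩ := Nat.find_spec hex
  generalize Nat.find hex = n at *
  have vinj : ∀ i j, i < j → j ≤ n → v i ≠ v j := by
    intro i j hij hjn e
    refine hmin (n - (j - i)) (by omega)
      ⟨fun k => if k ≤ i then v k else v (k + (j - i)),
       fun k => if k < i then B k else B (k + (j - i)), by simpa using h0, ?_, ?_⟩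
    · by_cases hc : n - (j - i) ≤ i
      · obtain rfl : j = n := by omega
        have : j - (j - i) = i := by omega
        simp only [this, le_refl, if_true]
        exact e.trans hn
      · simp only [hc, if_false]
        rw [show n - (j - i) + (j - i) = n by omega]
        exact hn
    · intro k hkn
      rcases lt_trichotomy k i with hc | hc | hc
      · simp only [hc, hc.le, show k + 1 ≤ i from hc, if_true]
        exact hk k (by omega)
      · subst hc
        simp only [lt_irrefl, le_refl, if_true, if_false, show ¬ (k + 1 ≤ k) by omega]
        have := hk j (by omega)
        rw [e, show k + (j - k) = j by omega, show k + 1 + (j - k) = j + 1 by omega]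
        exact this
      · simp only [show ¬ k < i by omega, show ¬ k ≤ i by omega, show ¬ k + 1 ≤ i by omega,
          if_false]
        have := hk (k + (j - i)) (by omega)
        rw [show k + 1 + (j - i) = k + (j - i) + 1 by omega]
        exact this
  have Binj : ∀ i j, i < j → j < n → B i ≠ B j := by
    intro i j hij hjn e
    refine hmin (n - (j - i)) (by omega)
      ⟨fun k => if k ≤ i then v k else v (k + (j - i)),
       fun k => if k ≤ i then B k else B (k + (j - i)), by simpa using h0, ?_, ?_⟩
    · simp only [show ¬ n - (j - i) ≤ i by omega, if_false]
      rw [show n - (j - i) + (j - i) = n by omega]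
      exact hn
    · intro k hkn
      rcases lt_trichotomy k i with hc | hc | hc
      · simp only [hc.le, show k + 1 ≤ i from hc, if_true]
        exact hk k (by omega)
      · subst hc
        simp only [le_refl, if_true, if_false, show ¬ (k + 1 ≤ k) by omega]
        rw [show k + 1 + (j - k) = j + 1 by omega]
        exact ⟨(hk k (by omega)).1, (hk k (by omega)).2.1, e ▸ (hk j (by omega)).2.2⟩
      · simp only [show ¬ k ≤ i by omega, show ¬ k + 1 ≤ i by omega, if_false]
        have := hk (k + (j - i)) (by omega)
        rw [show k + 1 + (j - i) = k + (j - i) + 1 by omega]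
        exact this
  have hnpos : n ≠ 0 := by
    rintro rfl
    exact hne (h0.symm.trans hn)
  obtain ⟨m, rfl⟩ := Nat.exists_eq_succ_of_ne_zero hnpos
  have hBA : ∀ k < m + 1, B k ≠ A := fun k hkm e => hA (e ▸ (hk k hkm).1)
  refine ⟨m, fun i => if i.val = 0 then A else B (i.val - 1), ?_, fun i => v i.val, ?_, ?_⟩
  · intro i j e
    have hi := i.2
    have hj := j.2
    dsimp only at e
    ext
    by_contra hij
    split_ifs at e with h1 h2 h2
    · omega
    · exact hBA _ (by omega) e.symm
    · exact hBA _ (by omega) e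
    · rcases lt_or_gt_of_ne hij with hl | hl
      · exact Binj _ _ (by omega) (by omega) e
      · exact Binj _ _ (by omega) (by omega) e.symm
  · intro i j e
    have hi := i.2
    have hj := j.2
    dsimp only at e
    ext
    by_contra hij
    rcases lt_or_gt_of_ne hij with hl | hl
    · exact vinj _ _ hl (by omega) e
    · exact vinj _ _ hl (by omega) e.symm
  · intro i
    have hi := i.2
    constructor
    · change inc q _ _
      beta_reduce
      split_ifs with hc
      · rw [hc, h0]; exact hy
      · have := (hk (i.val - 1) (by omega)).2.2
        rwa [show i.val - 1 + 1 = i.val by omega] at this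
    · change inc q _ _
      beta_reduce
      by_cases hc : i = Fin.last (m + 1)
      · subst hc
        simp only [Fin.last_add_one, Fin.val_zero, if_true, Fin.val_last]
        exact hn ▸ hy'
      · have hlt : i < Fin.last (m + 1) := Fin.lt_last_iff_ne_last.mpr hc
        rw [Fin.val_add_one_of_lt hlt]
        have : i.val < m + 1 := hlt
        simpa using (hk i.val this).2.1

theorem main_ind (q : CQ σ) (hacq : IsACQ q) (n : ℕ) :
    ∀ (S : Finset (Fin q.atoms.length)) (x : Fin q.nv), S.card = n →
      (∀ B ∈ S, ∃ v, inc q B v ∧ reach q S x v) →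
      ∃ q' : PQ σ, q'.size = S.card ∧ ∀ (I : Inst σ ℕ) (a : ℕ),
        PQ.sat I q' a ↔ ∃ h : Fin q.nv → ℕ, h x = a ∧
          ∀ B ∈ S, (⟨(q.atoms.get B).1, fun i => h ((q.atoms.get B).2 i)⟩ : Fact σ ℕ) ∈ I := by
  classical
  induction n using Nat.strong_induction_on with
  | _ n IH =>
  intro S x hS hreach
  rcases S.eq_empty_or_nonempty with rfl | ⟨B0, hB0⟩
  · refine ⟨.nil, by simp [PQ.size], fun I a => ?_⟩
    simp only [PQ.sat, true_iff]
    exact ⟨fun _ => a, rfl, by simp⟩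
  obtain ⟨A, hAS, hAx⟩ : ∃ A ∈ S, inc q A x := by
    obtain ⟨v, hv, hr⟩ := hreach B0 hB0
    rcases Relation.ReflTransGen.cases_head hr with rfl | ⟨c, ⟨C, hC, h1, _⟩, _⟩
    · exact ⟨B0, hB0, hv⟩
    · exact ⟨C, hC, h1⟩
  obtain ⟨p, hp⟩ := hAx
  have hinj : Function.Injective (q.atoms.get A).2 := hacq.2 _ (List.get_mem _ _)
  set S' := S.erase A with hS'
  have key : ∀ i j, reach q S' ((q.atoms.get A).2 i) ((q.atoms.get A).2 j) → i = j := by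
    intro i j hr
    by_contra hij
    exact hacq.1 (cycle_of_reach q S' A (by simp [hS']) (fun e => hij (hinj e)) ⟨i, rfl⟩ ⟨j, rfl⟩ hr)
  have cov : ∀ v, reach q S x v → ∃ i, reach q S' ((q.atoms.get A).2 i) v := by
    intro v hv
    induction hv with
    | refl => exact ⟨p, hp ▸ .refl⟩
    | @tail b c _ hs ih =>
      obtain ⟨C, hC, h1, h2⟩ := hs
      by_cases hCA : C = A
      · subst hCA
        obtain ⟨j, hj⟩ := h2
        exact ⟨j, hj ▸ .refl⟩
      · obtain ⟨i, hi⟩ := ih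
        exact ⟨i, hi.tail ⟨C, Finset.mem_erase.2 ⟨hCA, hC⟩, h1, h2⟩⟩
  let T : Fin (σ.ar (q.atoms.get A).1) → Finset (Fin q.atoms.length) := fun i =>
    S'.filter (fun B => ∃ v, inc q B v ∧ reach q S' ((q.atoms.get A).2 i) v)
  have hT : ∀ i B, B ∈ T i → ∀ w, inc q B w → reach q S' ((q.atoms.get A).2 i) w := by
    intro i B hB w hw
    obtain ⟨hB', v, hv, hr⟩ := Finset.mem_filter.1 hB
    exact hr.tail ⟨B, hB', hv, hw⟩
  have hTS : ∀ i, T i ⊆ S' := fun i => Finset.filter_subset _ _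
  have hTr : ∀ i v, reach q S' ((q.atoms.get A).2 i) v → reach q (T i) ((q.atoms.get A).2 i) v := by
    intro i v hv
    induction hv with
    | refl => exact .refl
    | @tail b c hb hs ih =>
      obtain ⟨C, hC, h1, h2⟩ := hs
      exact ih.tail ⟨C, Finset.mem_filter.2 ⟨hC, b, h1, hb⟩, h1, h2⟩
  have hunion : S' = Finset.univ.biUnion T := by
    ext B
    simp only [Finset.mem_biUnion, Finset.mem_univ, true_and]
    constructor
    · intro hB
      obtain ⟨v, hv, hr⟩ := hreach B (Finset.mem_of_mem_erase hB)
      obtain ⟨i, hi⟩ := cov v hr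
      exact ⟨i, Finset.mem_filter.2 ⟨hB, v, hv, hi⟩⟩
    · rintro ⟨i, hi⟩
      exact hTS i hi
  have hdisj : ∀ i j, i ≠ j → Disjoint (T i) (T j) := by
    intro i j hij
    rw [Finset.disjoint_left]
    intro B hBi hBj
    obtain ⟨_, v, hv, hr⟩ := Finset.mem_filter.1 hBi
    exact hij (key i j (hr.trans (reach_symm q S' (hT j B hBj v hv))))
  have hcard' : S'.card = ∑ i, (T i).card := by
    conv_lhs => rw [hunion]
    exact Finset.card_biUnion (fun i _ j _ hij => hdisj i j hij)
  have hcard : S.card = S'.card + 1 := (Finset.card_erase_add_one hAS).symm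
  have hsub : ∀ i, ∃ q' : PQ σ, q'.size = (T i).card ∧ ∀ (I : Inst σ ℕ) (a : ℕ),
        PQ.sat I q' a ↔ ∃ h : Fin q.nv → ℕ, h ((q.atoms.get A).2 i) = a ∧
          ∀ B ∈ T i, (⟨(q.atoms.get B).1, fun i => h ((q.atoms.get B).2 i)⟩ : Fact σ ℕ) ∈ I := by
    intro i
    refine IH (T i).card ?_ (T i) _ rfl ?_
    · have := Finset.card_le_card (hTS i)
      omega
    · intro B hB
      obtain ⟨_, v, hv, hr⟩ := Finset.mem_filter.1 hB
      exact ⟨v, hv, hTr i v hr⟩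
  choose Q hQs hQ using hsub
  refine ⟨.cons (q.atoms.get A).1 p Q (Q p), ?_, ?_⟩
  · rw [PQ.size, hcard, hcard', ← Finset.add_sum_erase _ _ (Finset.mem_univ p),
      ← Finset.add_sum_erase _ (fun i => (T i).card) (Finset.mem_univ p)]
    rw [if_pos rfl, hQs]
    have : ∑ i ∈ Finset.univ.erase p, (if i = p then 0 else (Q i).size)
        = ∑ i ∈ Finset.univ.erase p, (T i).card := by
      refine Finset.sum_congr rfl fun i hi => ?_
      rw [if_neg (Finset.ne_of_mem_erase hi), hQs]
    rw [this]
    omega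
  · intro I a
    rw [PQ.sat]
    constructor
    · rintro ⟨⟨t, htI, htp, hti⟩, hrest⟩
      have hall : ∀ i, PQ.sat I (Q i) (t i) := by
        intro i
        by_cases hip : i = p
        · subst hip
          rw [htp]; exact hrest
        · exact hti i hip
      have hall' := fun i => (hQ i I (t i)).1 (hall i)
      choose H hH1 hH2 using hall'
      let h : Fin q.nv → ℕ := fun v =>
        if hv : ∃ i, reach q S' ((q.atoms.get A).2 i) v then H hv.choose v else 0
      have hh : ∀ i v, reach q S' ((q.atoms.get A).2 i) v → h v = H i v := by
        intro i v hv
        have hex : ∃ i, reach q S' ((q.atoms.get A).2 i) v := ⟨i, hv⟩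
        have : hex.choose = i := key _ _ (hex.choose_spec.trans (reach_symm q S' hv))
        simp only [h, dif_pos hex, this]
      have hy : ∀ i, h ((q.atoms.get A).2 i) = t i := fun i => (hh i _ .refl).trans (hH1 i)
      refine ⟨h, by rw [← hp, hy, htp], fun B hB => ?_⟩
      by_cases hBA : B = A
      · subst hBA
        simp only [hy]
        exact htI
      · have hB' : B ∈ S' := Finset.mem_erase.2 ⟨hBA, hB⟩
        rw [hunion] at hB'
        obtain ⟨i, _, hi⟩ := Finset.mem_biUnion.1 hB'
        have := hH2 i B hi
        have e : (fun k => h ((q.atoms.get B).2 k)) = fun k => H i ((q.atoms.get B).2 k) := by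
          funext k
          exact hh i _ (hT i B hi _ ⟨k, rfl⟩)
        rw [e]
        exact this
    · rintro ⟨h, hx, hI⟩
      have hall : ∀ i, PQ.sat I (Q i) (h ((q.atoms.get A).2 i)) := fun i =>
        (hQ i I _).2 ⟨h, rfl, fun B hB => hI B (Finset.mem_of_mem_erase (hTS i hB))⟩
      refine ⟨⟨fun i => h ((q.atoms.get A).2 i), hI A hAS, by simp only [hp, hx],
        fun i _ => hall i⟩, ?_⟩
      have := hall p
      rwa [hp, hx] at this

/-- **Pointed query normal form.** Every connected Boolean acyclic CQ `q` can, for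
any of its variables `x`, be rewritten as `∃ x, q'(x)` for a pointed query `q'` with
the same number of atoms: for every instance, `q` holds iff `∃ a, q'(a)` holds. -/
theorem pointed_normal_form
    {σ : Sig} (q : CQ σ) (hconn : Connected q) (hacq : IsACQ q)
    (x : Fin q.nv) :
    ∃ q' : PQ σ, q'.size = q.size ∧
      ∀ I : Inst σ ℕ, (satCQ I q ↔ ∃ a : ℕ, PQ.sat I q' a) := by
  classical
  have hr : ∀ B ∈ (Finset.univ : Finset (Fin q.atoms.length)),
      ∃ v, inc q B v ∧ reach q Finset.univ x v := by
    by_contra hcon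
    push Not at hcon
    obtain ⟨B, _, hB⟩ := hcon
    obtain ⟨i, ⟨v, hv, hr⟩, j, hj, y, hy1, hy2⟩ :=
      hconn {B | ∃ v, inc q B v ∧ reach q Finset.univ x v} (by
        obtain ⟨A, hA, hA'⟩ := q.vars_occur x
        obtain ⟨k, rfl⟩ := List.mem_iff_get.1 hA
        exact ⟨k, x, hA', .refl⟩) ⟨B, fun ⟨v, h1, h2⟩ => hB v h1 h2⟩
    exact hj ⟨y, hy2, hr.tail ⟨i, Finset.mem_univ _, hv, hy1⟩⟩
  obtain ⟨q', hs, hq'⟩ := main_ind q hacq _ Finset.univ x rfl hr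
  refine ⟨q', by simpa [CQ.size] using hs, fun I => ?_⟩
  constructor
  · rintro ⟨h, hh⟩
    exact ⟨h x, (hq' I _).2 ⟨h, rfl, fun B _ => hh _ (List.get_mem _ _)⟩⟩
  · rintro ⟨a, ha⟩
    obtain ⟨h, _, hh⟩ := (hq' I a).1 ha
    refine ⟨h, fun A hA => ?_⟩
    obtain ⟨k, rfl⟩ := List.mem_iff_get.1 hA
    exact hh k (Finset.mem_univ _)

end FQA
end

section
/- (k-universal models for reversible constraints) Assume Σ_UID^rev and Σ_UFD are reversible, let k ∈ ℕ, and let I₀ be a finite instance satisfying Σ_UFD. Then there exists a finite superinstance I of I₀ that satisfies Σ_UID^rev ∪ Σ_UFD and is k-sound for Σ_UID^rev ∪ Σ_UFD, I₀, and the class ACQ of acyclic Boolean CQs (hence a finite k-universal model for ACQs). -/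
namespace FQA

variable {σ : Sig} {α β : Type}

/-- A unary inclusion dependency `src ⊆ dst` (nontrivial: `src ≠ dst`). -/
structure UID (σ : Sig) where
  src : σ.Pos
  dst : σ.Pos
  ne : src ≠ dst

/-- The reverse of a UID. -/
def UID.rev (τ : UID σ) : UID σ := ⟨τ.dst, τ.src, τ.ne.symm⟩

/-- An instance satisfies a UID if every element occurring at `src` also occurs at `dst`. -/
def satUID (I : Inst σ α) (τ : UID σ) : Prop :=
  ∀ a, occursAt I τ.src a → occursAt I τ.dst a

/-- A unary functional dependency `R^src → R^dst` (nontrivial: `src ≠ dst`). -/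
structure UFD (σ : Sig) where
  rel : σ.Rel
  src : Fin (σ.ar rel)
  dst : Fin (σ.ar rel)
  ne : src ≠ dst

/-- The reverse of a UFD. -/
def UFD.rev (φ : UFD σ) : UFD σ := ⟨φ.rel, φ.dst, φ.src, φ.ne.symm⟩

/-- The source position of a UFD, as a position of the signature. -/
def UFD.posSrc (φ : UFD σ) : σ.Pos := ⟨φ.rel, φ.src⟩

/-- The target position of a UFD, as a position of the signature. -/
def UFD.posDst (φ : UFD σ) : σ.Pos := ⟨φ.rel, φ.dst⟩

/-- An instance satisfies a UFD if any two facts of `rel` agreeing at `src` agree at `dst`. -/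
def satUFD (I : Inst σ α) (φ : UFD σ) : Prop :=
  ∀ t u : Fin (σ.ar φ.rel) → α,
    (⟨φ.rel, t⟩ : Fact σ α) ∈ I → (⟨φ.rel, u⟩ : Fact σ α) ∈ I →
    t φ.src = u φ.src → t φ.dst = u φ.dst

/-- A set of UIDs is transitively closed. -/
def TransClosedUID (Su : Set (UID σ)) : Prop :=
  ∀ τ ∈ Su, ∀ τ' ∈ Su, τ.dst = τ'.src →
    ∀ h : τ.src ≠ τ'.dst, (⟨τ.src, τ'.dst, h⟩ : UID σ) ∈ Su

/-- A set of UFDs is closed under UFD transitivity. -/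
def TransClosedUFD (Sf : Set (UFD σ)) : Prop :=
  ∀ (R : σ.Rel) (i j k : Fin (σ.ar R)) (h1 : i ≠ j) (h2 : j ≠ k) (h3 : i ≠ k),
    (⟨R, i, j, h1⟩ : UFD σ) ∈ Sf → (⟨R, j, k, h2⟩ : UFD σ) ∈ Sf →
    (⟨R, i, k, h3⟩ : UFD σ) ∈ Sf

/-- A position occurs in some UID of `Su`. -/
def occursInUIDs (Su : Set (UID σ)) (p : σ.Pos) : Prop :=
  ∃ τ ∈ Su, τ.src = p ∨ τ.dst = p

/-- The UIDs `Su` and UFDs `Sf` are reversible: both are closed under implication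
(transitivity), every UID of `Su` has its reverse in `Su`, and every UFD of `Sf`
whose two positions occur in UIDs of `Su` has its reverse in `Sf`. -/
def Reversible (Su : Set (UID σ)) (Sf : Set (UFD σ)) : Prop :=
  TransClosedUID Su ∧ TransClosedUFD Sf ∧
  (∀ τ ∈ Su, τ.rev ∈ Su) ∧
  (∀ φ ∈ Sf, occursInUIDs Su φ.posSrc → occursInUIDs Su φ.posDst → φ.rev ∈ Sf)

/-- An instance satisfies a set of UIDs and a set of UFDs. -/
def satAllU (I : Inst σ ℕ) (Su : Set (UID σ)) (Sf : Set (UFD σ)) : Prop :=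
  (∀ τ ∈ Su, satUID I τ) ∧ (∀ φ ∈ Sf, satUFD I φ)

/-- Unrestricted open-world entailment with respect to UIDs and UFDs. -/
def unrEntailsU (I₀ : Inst σ ℕ) (Su : Set (UID σ)) (Sf : Set (UFD σ)) (q : CQ σ) : Prop :=
  ∀ I : Inst σ ℕ, I₀ ⊆ I → satAllU I Su Sf → satCQ I q

/-- A (nontrivial) UID is finitely implied by UIDs `Su` and UFDs `Sf`. -/
def finImpUIDu (Su : Set (UID σ)) (Sf : Set (UFD σ)) (τ : UID σ) : Prop :=
  ∀ I : Inst σ ℕ, I.Finite → satAllU I Su Sf → satUID I τ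

/-- A (nontrivial) UFD is finitely implied by UIDs `Su` and UFDs `Sf`. -/
def finImpUFDu (Su : Set (UID σ)) (Sf : Set (UFD σ)) (φ : UFD σ) : Prop :=
  ∀ I : Inst σ ℕ, I.Finite → satAllU I Su Sf → satUFD I φ

/-- Elements of the UID chase: base elements of the initial instance, and nulls.
The null `CEl.null x p r` is the fresh element placed at position `r` of the fact
created to satisfy the requirement that `x` appear at position `p`. -/
inductive CEl (σ : Sig) : Type
  | base : ℕ → CEl σ
  | null : CEl σ → σ.Pos → σ.Pos → CEl σ

/-- `Created I₀ Su x p` holds when the UID chase of `I₀` by the (transitively closed)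
UIDs `Su` creates a new fact whose exported element is `x`, placed at position `p`.
The first round is performed as a core-chase round: for each element of `I₀` and each
position where it wants to appear, a single new fact is created; afterwards, each
null introduced at a position `r` spawns one new fact for each UID of `Su` with
source `r`. -/
inductive Created (I₀ : Inst σ ℕ) (Su : Set (UID σ)) : CEl σ → σ.Pos → Prop
  | root (a : ℕ) (p : σ.Pos) :
      (∃ τ ∈ Su, τ.dst = p ∧ occursAt I₀ τ.src a) →
      ¬ occursAt I₀ p a →
      Created I₀ Su (CEl.base a) p
  | step (x : CEl σ) (p r q : σ.Pos) :
      Created I₀ Su x p → r.1 = p.1 → r ≠ p →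
      (∃ τ ∈ Su, τ.src = r ∧ τ.dst = q) →
      Created I₀ Su (CEl.null x p r) q

/-- The UID chase of `I₀` by `Su`: the facts of `I₀` (over base elements) together
with, for each requirement `(x, p)` that is created, the fact of relation `p.1` with
`x` at position `p` and fresh nulls at all other positions. -/
def chaseInst (I₀ : Inst σ ℕ) (Su : Set (UID σ)) : Inst σ (CEl σ) :=
  {F | (∃ F₀ : Fact σ ℕ, F₀ ∈ I₀ ∧ F = ⟨F₀.1, fun i => CEl.base (F₀.2 i)⟩) ∨
       (∃ (x : CEl σ) (p : σ.Pos), Created I₀ Su x p ∧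
          F = ⟨p.1, fun i => if i = p.2 then x else CEl.null x p ⟨p.1, i⟩⟩)}


/-! ### Positions: similarity classes and FDs -/

def sim (Su : Set (UID σ)) (p q : σ.Pos) : Prop :=
  p = q ∨ ∃ τ ∈ Su, τ.src = p ∧ τ.dst = q

lemma sim_trans {Su : Set (UID σ)} (h : TransClosedUID Su) {p q r : σ.Pos}
    (h1 : sim Su p q) (h2 : sim Su q r) : sim Su p r := by
  rcases h1 with rfl | ⟨τ, hτ, rfl, rfl⟩
  · exact h2
  · rcases h2 with rfl | ⟨τ', hτ', h3, rfl⟩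
    · exact Or.inr ⟨τ, hτ, rfl, rfl⟩
    · by_cases hne : τ.src = τ'.dst
      · exact Or.inl hne
      · exact Or.inr ⟨_, h τ hτ τ' hτ' h3.symm hne, rfl, rfl⟩

lemma sim_symm {Su : Set (UID σ)} (h : ∀ τ ∈ Su, τ.rev ∈ Su) {p q : σ.Pos}
    (h1 : sim Su p q) : sim Su q p := by
  rcases h1 with rfl | ⟨τ, hτ, rfl, rfl⟩
  · exact Or.inl rfl
  · exact Or.inr ⟨τ.rev, h τ hτ, rfl, rfl⟩

def cls (Su : Set (UID σ)) (p : σ.Pos) : Set σ.Pos := {q | sim Su q p}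

lemma cls_eq_iff {Su : Set (UID σ)} (ht : TransClosedUID Su) (hs : ∀ τ ∈ Su, τ.rev ∈ Su)
    {p q : σ.Pos} : cls Su p = cls Su q ↔ sim Su p q := by
  constructor
  · intro h
    have : p ∈ cls Su p := Or.inl rfl
    rw [h] at this
    exact this
  · intro h
    ext r
    exact ⟨fun h1 => sim_trans ht h1 h, fun h1 => sim_trans ht h1 (sim_symm hs h)⟩

def FD (Sf : Set (UFD σ)) (R : σ.Rel) (i j : Fin (σ.ar R)) : Prop :=
  ∃ h : i ≠ j, (⟨R, i, j, h⟩ : UFD σ) ∈ Sf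

lemma exists_enum {γ : Type} (d : γ) (S : Set γ) (hS : S.Finite) :
    ∃ e : ℕ → γ, Set.InjOn e (Set.Iio S.ncard) ∧ e '' Set.Iio S.ncard = S := by
  classical
  have hc : S.ncard = hS.toFinset.card := Set.ncard_eq_toFinset_card S hS
  let f := hS.toFinset.equivFin.symm
  refine ⟨fun n => if h : n < hS.toFinset.card then (f ⟨n, h⟩ : γ) else d, ?_, ?_⟩
  · intro a ha b hb hab
    rw [Set.mem_Iio, hc] at ha hb
    simp only [ha, hb, dif_pos] at hab
    have := f.injective (Subtype.ext hab)
    simpa using this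
  · ext v
    constructor
    · rintro ⟨n, hn, rfl⟩
      rw [Set.mem_Iio, hc] at hn
      simp only [hn, dif_pos]
      exact hS.mem_toFinset.1 (f ⟨n, hn⟩).2
    · intro hv
      have hv' : v ∈ hS.toFinset := hS.mem_toFinset.2 hv
      refine ⟨f.symm ⟨v, hv'⟩, ?_, ?_⟩
      · rw [Set.mem_Iio, hc]; exact (f.symm ⟨v, hv'⟩).2
      · simp

def proj {γ : Type} (K : Inst σ γ) (p : σ.Pos) : Set γ := {v | occursAt K p v}

lemma activeDom_finite {γ : Type} {K : Inst σ γ} (hK : K.Finite) : (activeDom K).Finite := by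
  have : activeDom K ⊆ ⋃ F ∈ K, Set.range F.2 := by
    rintro a ⟨F, hF, i, rfl⟩
    simp only [Set.mem_iUnion]
    exact ⟨F, hF, i, rfl⟩
  exact (hK.biUnion fun F _ => Set.finite_range _).subset this

lemma proj_subset {γ : Type} (K : Inst σ γ) (p : σ.Pos) : proj K p ⊆ activeDom K := by
  rintro v ⟨t, ht, rfl⟩
  exact ⟨_, ht, p.2, rfl⟩

lemma proj_ncard_le {γ : Type} {K : Inst σ γ} (hK : K.Finite) {φ : UFD σ}
    (h : satUFD K φ) : (proj K φ.posDst).ncard ≤ (proj K φ.posSrc).ncard := by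
  classical
  have hf : (proj K φ.posSrc).Finite := (activeDom_finite hK).subset (proj_subset _ _)
  have hc : ∀ v : γ, ∃ w : γ, ∀ t : Fin (σ.ar φ.rel) → γ, (⟨φ.rel, t⟩ : Fact σ γ) ∈ K →
      t φ.src = v → t φ.dst = w := by
    intro v
    by_cases hv : ∃ t : Fin (σ.ar φ.rel) → γ, (⟨φ.rel, t⟩ : Fact σ γ) ∈ K ∧ t φ.src = v
    · obtain ⟨t, ht, rfl⟩ := hv
      exact ⟨t φ.dst, fun u hu huv => h u t hu ht huv⟩
    · exact ⟨v, fun t ht htv => absurd ⟨t, ht, htv⟩ hv⟩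
  choose f hfspec using hc
  have hsub : proj K φ.posDst ⊆ f '' proj K φ.posSrc := by
    rintro w ⟨t, ht, rfl⟩
    exact ⟨t φ.src, ⟨t, ht, rfl⟩, (hfspec _ t ht rfl).symm⟩
  exact (Set.ncard_le_ncard hsub (hf.image f)).trans (Set.ncard_image_le hf)

theorem completion {γ : Type} {Su : Set (UID σ)} {Sf : Set (UFD σ)}
    (hrev : Reversible Su Sf) (K : Inst σ γ) (hK : K.Finite)
    (hKf : ∀ φ ∈ Sf, satUFD K φ)
    (tmp : ∀ R : σ.Rel, Fin (σ.ar R) → γ) (htmp : ∀ R, (⟨R, tmp R⟩ : Fact σ γ) ∈ K)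
    (fl : Set σ.Pos → ℕ → γ) (hfl : ∀ c, Function.Injective (fl c))
    (hfl' : ∀ c n, fl c n ∉ activeDom K) :
    ∃ I : Inst σ γ, K ⊆ I ∧ I.Finite ∧ (∀ τ ∈ Su, satUID I τ) ∧ (∀ φ ∈ Sf, satUFD I φ) ∧
      ∀ R t, (⟨R, t⟩ : Fact σ γ) ∈ I → (⟨R, t⟩ : Fact σ γ) ∈ K ∨ ∀ i,
        t i = tmp R i ∨ (∃ n, t i = fl (cls Su ⟨R, i⟩) n) ∨
        (¬ occursAt K ⟨R, i⟩ (t i) ∧ ∃ q, sim Su q ⟨R, i⟩ ∧ occursAt K q (t i)) := by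
  classical
  obtain ⟨htu, htf, hru, hrf⟩ := hrev
  have hRel := σ.rel_fin
  have hA := activeDom_finite hK
  set B := (activeDom K).ncard with hB
  -- the class domains
  have hElt : ∀ c : Set σ.Pos, ∃ E : Set γ, E.Finite ∧ E.ncard = B ∧
      (∀ q ∈ c, proj K q ⊆ E) ∧ ∀ v ∈ E, (∃ n, v = fl c n) ∨ ∃ q ∈ c, v ∈ proj K q := by
    intro c
    let D : Set γ := ⋃ q ∈ c, proj K q
    have hDA : D ⊆ activeDom K := Set.iUnion₂_subset fun q _ => proj_subset K q
    have hDf : D.Finite := hA.subset hDA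
    let Z : Finset γ := (Finset.range B).image (fl c)
    have hZ : Z.card = B := by
      rw [Finset.card_image_of_injective _ (hfl c), Finset.card_range]
    obtain ⟨E, h1, h2, h3⟩ := Finset.exists_subsuperset_card_eq
      (s := hDf.toFinset) (t := hDf.toFinset ∪ Z) (n := B) Finset.subset_union_left
      (by rw [← Set.ncard_eq_toFinset_card D hDf]; exact Set.ncard_le_ncard hDA hA)
      (hZ.symm.le.trans (Finset.card_le_card Finset.subset_union_right))
    refine ⟨E, E.finite_toSet, by rw [Set.ncard_coe_finset, h3], ?_, ?_⟩
    · intro q hq v hv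
      exact h1 (hDf.mem_toFinset.2 (Set.mem_biUnion hq hv))
    · intro v hv
      rcases Finset.mem_union.1 (h2 hv) with h | h
      · right
        simpa [D] using hDf.mem_toFinset.1 h
      · left
        obtain ⟨n, _, rfl⟩ := Finset.mem_image.1 h
        exact ⟨n, rfl⟩
  choose Elt hEf hEc hEsub hEmem using hElt
  have hProjE : ∀ p, proj K p ⊆ Elt (cls Su p) := fun p => hEsub _ p (Or.inl rfl)
  let m : σ.Pos → ℕ := fun p => (Elt (cls Su p) \ proj K p).ncard
  have hm : ∀ p, m p = B - (proj K p).ncard := fun p => by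
    simp only [m]
    rw [Set.ncard_sdiff (hProjE p) (hA.subset (proj_subset K p)), hEc]
  have hmB : ∀ p, m p ≤ B := fun p => by rw [hm]; exact Nat.sub_le _ _
  -- enumerations of new elements
  have hen : ∀ p : σ.Pos, ∃ e : ℕ → γ,
      (occursInUIDs Su p → Set.InjOn e (Set.Iio (m p)) ∧
        e '' Set.Iio (m p) = Elt (cls Su p) \ proj K p) ∧
      (¬ occursInUIDs Su p → e = fl (cls Su p)) := by
    intro p
    by_cases hp : occursInUIDs Su p
    · obtain ⟨e, he⟩ := exists_enum (fl ∅ 0) (Elt (cls Su p) \ proj K p) ((hEf _).sdiff)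
      exact ⟨e, fun _ => he, fun h => absurd hp h⟩
    · exact ⟨_, fun h => absurd h hp, fun _ => rfl⟩
  choose e he1 he2 using hen
  have E1 : ∀ p i j, (occursInUIDs Su p → i < m p) → (occursInUIDs Su p → j < m p) →
      e p i = e p j → i = j := by
    intro p i j hi hj hij
    by_cases hp : occursInUIDs Su p
    · exact (he1 p hp).1 (hi hp) (hj hp) hij
    · rw [he2 p hp] at hij
      exact hfl _ hij
  have E2 : ∀ p i, (occursInUIDs Su p → i < m p) → e p i ∉ proj K p := by
    intro p i hi
    by_cases hp : occursInUIDs Su p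
    · have : e p i ∈ Elt (cls Su p) \ proj K p := by
        rw [← (he1 p hp).2]; exact ⟨i, hi hp, rfl⟩
      exact this.2
    · rw [he2 p hp]
      exact fun h => hfl' _ _ (proj_subset K p h)
  have E3 : ∀ p i, (occursInUIDs Su p → i < m p) →
      (∃ n, e p i = fl (cls Su p) n) ∨ ∃ q, sim Su q p ∧ e p i ∈ proj K q := by
    intro p i hi
    by_cases hp : occursInUIDs Su p
    · have : e p i ∈ Elt (cls Su p) \ proj K p := by
        rw [← (he1 p hp).2]; exact ⟨i, hi hp, rfl⟩
      exact hEmem _ _ this.1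
    · rw [he2 p hp]
      exact Or.inl ⟨_, rfl⟩
  let reuse : ∀ R : σ.Rel, ℕ → Fin (σ.ar R) → Prop := fun R j i =>
    ∃ p, occursInUIDs Su ⟨R, p⟩ ∧ (p = i ∨ FD Sf R p i) ∧ m ⟨R, p⟩ ≤ j
  have hnew : ∀ R j i, ¬ reuse R j i → (occursInUIDs Su ⟨R, i⟩ → j < m ⟨R, i⟩) := by
    intro R j i h hp
    by_contra hlt
    exact h ⟨i, hp, Or.inl rfl, not_lt.1 hlt⟩
  have hreuse : ∀ R j i i', reuse R j i → FD Sf R i i' → reuse R j i' := by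
    rintro R j i i' ⟨p, hp, hpi, hmj⟩ hii
    refine ⟨p, hp, ?_, hmj⟩
    rcases hpi with rfl | ⟨h1, h1'⟩
    · exact Or.inr hii
    · obtain ⟨h2, h2'⟩ := hii
      by_cases h : p = i'
      · exact Or.inl h
      · exact Or.inr ⟨h, htf R p i i' h1 h2 h h1' h2'⟩
  let G : ∀ R : σ.Rel, ℕ → Fin (σ.ar R) → γ := fun R j i =>
    if reuse R j i then tmp R i else e ⟨R, i⟩ j
  let I : Inst σ γ := K ∪ {H | ∃ R, ∃ j < B, H = ⟨R, G R j⟩}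
  have hI : ∀ R t, (⟨R, t⟩ : Fact σ γ) ∈ I → (⟨R, t⟩ : Fact σ γ) ∈ K ∨ ∃ j < B, t = G R j := by
    rintro R t (h | ⟨R', j, hj, h⟩)
    · exact Or.inl h
    · cases h
      exact Or.inr ⟨j, hj, rfl⟩
  have hKI : K ⊆ I := Set.subset_union_left
  -- projection of I at UID positions
  have hP1 : ∀ p v, occursInUIDs Su p → occursAt I p v → v ∈ Elt (cls Su p) := by
    rintro ⟨R, i⟩ v hp ⟨t, ht, rfl⟩
    rcases hI _ _ ht with h | ⟨j, hj, rfl⟩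
    · exact hProjE _ ⟨t, h, rfl⟩
    · by_cases hr : reuse R j i
      · simp only [G, hr, if_true]
        exact hProjE _ ⟨_, htmp R, rfl⟩
      · simp only [G, hr, if_false]
        have : e ⟨R, i⟩ j ∈ Elt (cls Su ⟨R, i⟩) \ proj K ⟨R, i⟩ := by
          rw [← (he1 _ hp).2]; exact ⟨j, hnew R j i hr hp, rfl⟩
        exact this.1
  have hP2 : ∀ p v, occursInUIDs Su p → v ∈ Elt (cls Su p) → occursAt I p v := by
    rintro ⟨R, i⟩ v hp hv
    by_cases hvK : v ∈ proj K ⟨R, i⟩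
    · obtain ⟨t, ht, htv⟩ := hvK
      exact ⟨t, hKI ht, htv⟩
    · have : v ∈ Elt (cls Su ⟨R, i⟩) \ proj K ⟨R, i⟩ := ⟨hv, hvK⟩
      rw [← (he1 _ hp).2] at this
      obtain ⟨j, hj, rfl⟩ := this
      have hr : ¬ reuse R j i := by
        rintro ⟨p, hp', hpi, hmj⟩
        rcases hpi with rfl | ⟨hne, hF⟩
        · exact absurd hj (not_lt.2 hmj)
        · have h1 := proj_ncard_le hK (hKf _ hF)
          have h2 := proj_ncard_le hK (hKf _ (hrf _ hF hp' hp))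
          have h3 : (proj K ⟨R, i⟩).ncard = (proj K ⟨R, p⟩).ncard := le_antisymm h1 h2
          rw [hm, ← h3, ← hm] at hmj
          exact absurd hj (not_lt.2 hmj)
      refine ⟨G R j, Or.inr ⟨R, j, lt_of_lt_of_le hj (hmB _), rfl⟩, ?_⟩
      simp only [G, hr, if_false]
  refine ⟨I, hKI, ?_, ?_, ?_, ?_⟩
  · refine hK.union ?_
    have : {H : Fact σ γ | ∃ R, ∃ j < B, H = ⟨R, G R j⟩} =
        (fun x : σ.Rel × ℕ => (⟨x.1, G x.1 x.2⟩ : Fact σ γ)) '' (Set.univ ×ˢ Set.Iio B) := by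
      ext H
      simp only [Set.mem_ofPred_eq, Set.mem_image, Set.mem_prod, Set.mem_univ, true_and,
        Set.mem_Iio, Prod.exists]
      exact ⟨fun ⟨R, j, hj, h⟩ => ⟨R, j, hj, h.symm⟩, fun ⟨R, j, hj, h⟩ => ⟨R, j, hj, h.symm⟩⟩
    rw [this]
    exact (Set.finite_univ.prod (Set.finite_Iio B)).image _
  · intro τ hτ v hv
    have h1 : occursInUIDs Su τ.src := ⟨τ, hτ, Or.inl rfl⟩
    have h2 : occursInUIDs Su τ.dst := ⟨τ, hτ, Or.inr rfl⟩
    apply hP2 _ _ h2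
    rw [← (cls_eq_iff htu hru).2 (Or.inr ⟨τ, hτ, rfl, rfl⟩ : sim Su τ.src τ.dst)]
    exact hP1 _ _ h1 hv
  · rintro ⟨R, u, v, huv⟩ hφ t s ht hs hts
    have hFD : FD Sf R u v := ⟨huv, hφ⟩
    change t u = s u at hts
    change t v = s v
    have key : ∀ t, (⟨R, t⟩ : Fact σ γ) ∈ I →
        (∃ t', (⟨R, t'⟩ : Fact σ γ) ∈ K ∧ t u = t' u ∧ t v = t' v) ∨
        ∃ j, t = G R j ∧ t u = e ⟨R, u⟩ j ∧ (occursInUIDs Su ⟨R, u⟩ → j < m ⟨R, u⟩) := by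
      intro t ht
      rcases hI _ _ ht with h | ⟨j, hj, rfl⟩
      · exact Or.inl ⟨t, h, rfl, rfl⟩
      · by_cases hr : reuse R j u
        · left
          have hr' := hreuse R j u v hr hFD
          exact ⟨tmp R, htmp R, by simp only [G, hr, if_true], by simp only [G, hr', if_true]⟩
        · right
          exact ⟨j, rfl, by simp only [G, hr, if_false], hnew R j u hr⟩
    rcases key t ht with ⟨t', ht', h1, h2⟩ | ⟨j, h1, h2, h3⟩
    · rcases key s hs with ⟨s', hs', h1', h2'⟩ | ⟨j, h1', h2', h3'⟩
      · rw [h2, h2']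
        exact hKf _ hφ t' s' ht' hs' (by change t' u = s' u; rw [← h1, ← h1', hts])
      · exact absurd ⟨t', ht', by rw [← h2', ← hts, h1]⟩ (E2 ⟨R, u⟩ j h3')
    · rcases key s hs with ⟨s', hs', h1', h2'⟩ | ⟨j', h1', h2', h3'⟩
      · exact absurd ⟨s', hs', by rw [← h2, hts, h1']⟩ (E2 ⟨R, u⟩ j h3)
      · have := E1 _ _ _ h3 h3' (by rw [← h2, ← h2', hts])
        rw [h1, h1', this]
  · intro R t ht
    rcases hI _ _ ht with h | ⟨j, hj, rfl⟩
    · exact Or.inl h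
    · right
      intro i
      by_cases hr : reuse R j i
      · left; simp only [G, hr, if_true]
      · right
        have hn := hnew R j i hr
        have hG : G R j i = e ⟨R, i⟩ j := by simp only [G, hr, if_false]
        rw [hG]
        rcases E3 _ _ hn with h | h
        · exact Or.inl h
        · exact Or.inr ⟨E2 _ _ hn, h⟩

/-! ### Acyclic queries -/

lemma cycle_of_walk {ι V : Type} [Finite ι] (inc : V → ι → Prop) (A : ℕ → ι) (x : ℕ → V)
    (h1 : ∀ n, inc (x n) (A n)) (h2 : ∀ n, inc (x n) (A (n + 1)))
    (hA : ∀ n, A n ≠ A (n + 1)) (hx : ∀ n, x n ≠ x (n + 1)) :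
    ∃ m : ℕ, ∃ A' : Fin (m + 2) → ι, Function.Injective A' ∧
      ∃ x' : Fin (m + 2) → V, Function.Injective x' ∧
        ∀ i : Fin (m + 2), inc (x' i) (A' i) ∧ inc (x' i) (A' (i + 1)) := by
  classical
  have hex : ∃ n, 0 < n ∧ ∃ i, A i = A (i + n) ∨ x i = x (i + n) := by
    obtain ⟨a, b, hab, h⟩ := Finite.exists_ne_map_eq_of_infinite A
    rcases lt_or_gt_of_ne hab with hl | hl
    · exact ⟨b - a, by omega, a, Or.inl (by rw [h]; congr 1; omega)⟩
    · exact ⟨a - b, by omega, b, Or.inl (by rw [← h]; congr 1; omega)⟩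
  obtain ⟨n, ⟨hn0, i, hi⟩, hmin⟩ : ∃ n, (0 < n ∧ ∃ i, A i = A (i + n) ∨ x i = x (i + n)) ∧
      ∀ m < n, ¬ (0 < m ∧ ∃ i, A i = A (i + m) ∨ x i = x (i + m)) :=
    ⟨Nat.find hex, Nat.find_spec hex, fun m hm => Nat.find_min hex hm⟩
  have hn2 : 2 ≤ n := by
    by_contra hlt
    have : n = 1 := by omega
    subst this
    rcases hi with h | h
    · exact hA _ h
    · exact hx _ h
  obtain ⟨m, rfl⟩ : ∃ m, n = m + 2 := ⟨n - 2, by omega⟩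
  have injA : ∀ s, Function.Injective (fun t : Fin (m + 2) => A (s + t)) := by
    intro s a b hab
    simp only at hab
    by_contra hne
    have hne' : (a : ℕ) ≠ b := fun h => hne (Fin.ext h)
    rcases lt_or_gt_of_ne hne' with hl | hl
    · exact hmin (b - a) (by omega) ⟨by omega, s + a, Or.inl (by rw [hab]; congr 1; omega)⟩
    · exact hmin (a - b) (by omega) ⟨by omega, s + b, Or.inl (by rw [← hab]; congr 1; omega)⟩
  have injx : ∀ s, Function.Injective (fun t : Fin (m + 2) => x (s + t)) := by
    intro s a b hab
    simp only at hab
    by_contra hne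
    have hne' : (a : ℕ) ≠ b := fun h => hne (Fin.ext h)
    rcases lt_or_gt_of_ne hne' with hl | hl
    · exact hmin (b - a) (by omega) ⟨by omega, s + a, Or.inr (by rw [hab]; congr 1; omega)⟩
    · exact hmin (a - b) (by omega) ⟨by omega, s + b, Or.inr (by rw [← hab]; congr 1; omega)⟩
  have hsucc : ∀ t : Fin (m + 2), (t.val + 1 < m + 2 ∧ (t + 1).val = t.val + 1) ∨
      (t.val = m + 1 ∧ (t + 1).val = 0) := by
    intro t
    by_cases h : t.val + 1 < m + 2
    · left
      refine ⟨h, ?_⟩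
      rw [Fin.val_add_one_of_lt]
      rw [Fin.lt_def, Fin.val_last]; omega
    · right
      have h' : t = Fin.last (m + 1) := Fin.ext (by rw [Fin.val_last]; omega)
      subst h'
      simp
  rcases hi with hi | hi
  · refine ⟨m, _, injA i, _, injx i, fun t => ⟨h1 _, ?_⟩⟩
    rcases hsucc t with ⟨_, h⟩ | ⟨h', h⟩
    · simp only [h]; exact h2 (i + t)
    · have := h2 (i + (m + 1))
      simp only [h, h']
      rw [add_zero, hi]; exact this
  · refine ⟨m, _, injA (i + 1), _, injx (i + 1), fun t => ⟨h1 _, ?_⟩⟩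
    rcases hsucc t with ⟨_, h⟩ | ⟨h', h⟩
    · simp only [h]; exact h2 (i + 1 + t)
    · have := h2 i
      simp only [h, h']
      rw [show i + 1 + (m + 1) = i + (m + 2) by omega, ← hi]; exact this

lemma exists_leaf_s14 {ι V : Type} [Finite ι] (inc : V → ι → Prop)
    (hac : ¬ ∃ m : ℕ, ∃ A' : Fin (m + 2) → ι, Function.Injective A' ∧
      ∃ x' : Fin (m + 2) → V, Function.Injective x' ∧
        ∀ i : Fin (m + 2), inc (x' i) (A' i) ∧ inc (x' i) (A' (i + 1)))
    (S : Finset ι) (hS : S.Nonempty) :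
    ∃ a ∈ S, ∀ x y, inc x a → inc y a → (∃ b ∈ S, b ≠ a ∧ inc x b) →
      (∃ b ∈ S, b ≠ a ∧ inc y b) → x = y := by
  classical
  by_contra hcon
  push Not at hcon
  have hnext : ∀ s : {a // a ∈ S} × V, ∃ s' : {a // a ∈ S} × V,
      s'.1 ≠ s.1 ∧ s'.2 ≠ s.2 ∧ inc s'.2 s.1 ∧ inc s'.2 s'.1 := by
    rintro ⟨⟨a, ha⟩, w⟩
    obtain ⟨x, y, hx, hy, ⟨b, hb, hba, hxb⟩, ⟨c, hc, hca, hyc⟩, hxy⟩ := hcon a ha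
    by_cases hxw : x = w
    · refine ⟨(⟨c, hc⟩, y), ?_, ?_, hy, hyc⟩
      · exact fun h => hca (congrArg Subtype.val h)
      · exact fun h => hxy (hxw.trans h.symm)
    · exact ⟨(⟨b, hb⟩, x), fun h => hba (congrArg Subtype.val h), hxw, hx, hxb⟩
  choose nx hnx using hnext
  obtain ⟨a0, ha0⟩ := hS
  obtain ⟨x0, -⟩ := hcon a0 ha0
  let seq : ℕ → {a // a ∈ S} × V := fun n => nx^[n] (⟨a0, ha0⟩, x0)
  have hseq : ∀ n, seq (n + 1) = nx (seq n) := fun n => Function.iterate_succ_apply' nx n _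
  apply hac
  apply cycle_of_walk inc (fun n => (seq n).1) (fun n => (seq (n + 1)).2)
  · intro n; simp only [hseq]; exact (hnx _).2.2.1
  · intro n; simp only [hseq]; exact (hnx _).2.2.2
  · intro n h; simp only [hseq] at h; exact (hnx _).1 (Subtype.ext h.symm)
  · intro n h; rw [hseq (n + 1)] at h; exact (hnx _).2.1 h.symm

lemma acyclic_hom {V : Type} {n : ℕ} (at' : Fin n → Fact σ V)
    (hac : ¬ ∃ m : ℕ, ∃ A' : Fin (m + 2) → Fin n, Function.Injective A' ∧
      ∃ x' : Fin (m + 2) → V, Function.Injective x' ∧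
        ∀ i : Fin (m + 2), (∃ a, (at' (A' i)).2 a = x' i) ∧ (∃ a, (at' (A' (i + 1))).2 a = x' i))
    (hinj : ∀ a, Function.Injective (at' a).2)
    (Su : Set (UID σ)) (M : Inst σ ℕ) (hM : ∀ τ ∈ Su, satUID M τ)
    (hne : ∀ R, ∃ t, (⟨R, t⟩ : Fact σ ℕ) ∈ M) (S : Finset (Fin n))
    (hwc : ∀ a ∈ S, ∀ b ∈ S, ∀ i j, (at' a).2 i = (at' b).2 j →
      sim Su ⟨(at' a).1, i⟩ ⟨(at' b).1, j⟩) :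
    ∃ g : V → ℕ, ∀ a ∈ S, (⟨(at' a).1, fun i => g ((at' a).2 i)⟩ : Fact σ ℕ) ∈ M := by
  classical
  induction S using Finset.strongInduction with
  | H S ih =>
    rcases S.eq_empty_or_nonempty with rfl | hS
    · exact ⟨fun _ => 0, by simp⟩
    obtain ⟨a, ha, hleaf⟩ := exists_leaf_s14 (fun x a => ∃ i, (at' a).2 i = x) hac S hS
    obtain ⟨g, hg⟩ := ih (S.erase a) (Finset.erase_ssubset ha)
      (fun b hb c hc => hwc b (Finset.mem_of_mem_erase hb) c (Finset.mem_of_mem_erase hc))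
    -- the fact for the leaf
    have ht : ∃ t : Fin (σ.ar (at' a).1) → ℕ, (⟨(at' a).1, t⟩ : Fact σ ℕ) ∈ M ∧
        ∀ i, (∃ b ∈ S, b ≠ a ∧ ∃ j, (at' b).2 j = (at' a).2 i) → t i = g ((at' a).2 i) := by
      by_cases hsh : ∃ i, ∃ b ∈ S, b ≠ a ∧ ∃ j, (at' b).2 j = (at' a).2 i
      · obtain ⟨i, b, hb, hba, j, hj⟩ := hsh
        have hocc : occursAt M ⟨(at' b).1, j⟩ (g ((at' a).2 i)) :=
          ⟨_, hg b (Finset.mem_erase.2 ⟨hba, hb⟩), by simp only [hj]⟩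
        have hocc' : occursAt M ⟨(at' a).1, i⟩ (g ((at' a).2 i)) := by
          rcases hwc b hb a ha j i hj with h | ⟨τ, hτ, h1, h2⟩
          · rw [← h]; exact hocc
          · rw [← h2]; apply hM τ hτ; rw [h1]; exact hocc
        obtain ⟨t, ht, hti⟩ := hocc'
        refine ⟨t, ht, fun i' hi' => ?_⟩
        have := hleaf _ _ ⟨i, rfl⟩ ⟨i', rfl⟩ ⟨b, hb, hba, j, hj⟩ hi'
        have hii := hinj a this
        subst hii
        exact hti
      · obtain ⟨t, ht⟩ := hne (at' a).1
        exact ⟨t, ht, fun i hi => absurd ⟨i, hi⟩ hsh⟩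
    obtain ⟨t, ht, hti⟩ := ht
    refine ⟨fun x => if h : ∃ i, (at' a).2 i = x then t h.choose else g x, ?_⟩
    intro b hb
    by_cases hba : b = a
    · subst hba
      convert ht using 2
      ext i
      dsimp only
      have hex : ∃ i', (at' b).2 i' = (at' b).2 i := ⟨i, rfl⟩
      rw [dif_pos hex]
      exact congrArg t (hinj b hex.choose_spec)
    · convert hg b (Finset.mem_erase.2 ⟨hba, hb⟩) using 2
      ext j
      dsimp only
      by_cases hex : ∃ i, (at' a).2 i = (at' b).2 j
      · rw [dif_pos hex, hti _ ⟨b, hb, hba, j, hex.choose_spec.symm⟩, hex.choose_spec]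
      · rw [dif_neg hex]

/-! ### The truncated chase -/

def CEl.depth : CEl σ → ℕ
  | CEl.base _ => 0
  | CEl.null x _ _ => x.depth + 1

open Classical in
noncomputable def cval (x : CEl σ) (p r : σ.Pos) : CEl σ := if r = p then x else CEl.null x p r

lemma cval_self (x : CEl σ) (p : σ.Pos) : cval x p p = x := by simp [cval]

lemma cval_ne (x : CEl σ) {p r : σ.Pos} (h : r ≠ p) : cval x p r = CEl.null x p r := by
  simp [cval, h]

noncomputable def cfact (x : CEl σ) (p : σ.Pos) : Fact σ (CEl σ) :=
  ⟨p.1, fun i => cval x p ⟨p.1, i⟩⟩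

def trunc (I₀ : Inst σ ℕ) (Su : Set (UID σ)) (N : ℕ) : Inst σ (CEl σ) :=
  {F | (∃ F₀ : Fact σ ℕ, F₀ ∈ I₀ ∧ F = ⟨F₀.1, fun i => CEl.base (F₀.2 i)⟩) ∨
       (∃ (x : CEl σ) (p : σ.Pos), Created I₀ Su x p ∧ x.depth < N ∧ F = cfact x p)}

lemma mem_trunc {I₀ : Inst σ ℕ} {Su : Set (UID σ)} {N : ℕ} {R : σ.Rel}
    {t : Fin (σ.ar R) → CEl σ} (h : (⟨R, t⟩ : Fact σ (CEl σ)) ∈ trunc I₀ Su N) :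
    (∃ t₀ : Fin (σ.ar R) → ℕ, (⟨R, t₀⟩ : Fact σ ℕ) ∈ I₀ ∧ t = fun i => CEl.base (t₀ i)) ∨
    ∃ x i, Created I₀ Su x ⟨R, i⟩ ∧ x.depth < N ∧ t = fun j => cval x ⟨R, i⟩ ⟨R, j⟩ := by
  rcases h with ⟨⟨R₀, t₀⟩, h0, h1⟩ | ⟨x, ⟨R', i⟩, h0, h1, h2⟩
  · cases h1
    exact Or.inl ⟨t₀, h0, rfl⟩
  · cases h2
    exact Or.inr ⟨x, i, h0, h1, rfl⟩

lemma created_finite {I₀ : Inst σ ℕ} (hI : I₀.Finite) (Su : Set (UID σ)) (N : ℕ) :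
    {x : CEl σ | (∃ p, Created I₀ Su x p) ∧ x.depth < N}.Finite := by
  have := σ.rel_fin
  induction N with
  | zero => simp
  | succ N ih =>
    have h1 : (CEl.base (σ := σ) '' activeDom I₀).Finite := (activeDom_finite hI).image _
    have h2 := ((ih.prod (Set.finite_univ (α := σ.Pos × σ.Pos))).image
      (fun y => CEl.null y.1 y.2.1 y.2.2))
    refine (h1.union h2).subset ?_
    rintro x ⟨⟨p, hp⟩, hd⟩
    cases hp with
    | root a _ h _ =>
      obtain ⟨τ, _, _, t, ht, hta⟩ := h
      exact Or.inl ⟨a, ⟨_, ht, _, hta⟩, rfl⟩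
    | step y p' r _ h _ _ _ =>
      refine Or.inr ⟨(y, p', r), ⟨⟨⟨p', h⟩, ?_⟩, trivial⟩, rfl⟩
      simp only [CEl.depth] at hd
      exact Nat.lt_of_succ_lt_succ hd

lemma trunc_finite {I₀ : Inst σ ℕ} (hI : I₀.Finite) (Su : Set (UID σ)) (N : ℕ) :
    (trunc I₀ Su N).Finite := by
  have := σ.rel_fin
  have h1 := hI.image (fun F₀ : Fact σ ℕ =>
    (⟨F₀.1, fun i => CEl.base (F₀.2 i)⟩ : Fact σ (CEl σ)))
  have h2 := ((created_finite hI Su N).prod (Set.finite_univ (α := σ.Pos))).image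
    (fun y => cfact y.1 y.2)
  refine (h1.union h2).subset ?_
  rintro F (⟨F₀, h, rfl⟩ | ⟨x, p, hc, hd, rfl⟩)
  · exact Or.inl ⟨F₀, h, rfl⟩
  · exact Or.inr ⟨(x, p), ⟨⟨⟨p, hc⟩, hd⟩, trivial⟩, rfl⟩

lemma null_created {I₀ : Inst σ ℕ} {Su : Set (UID σ)} {x : CEl σ} {p r q : σ.Pos}
    (h : Created I₀ Su (CEl.null x p r) q) :
    Created I₀ Su x p ∧ r.1 = p.1 ∧ r ≠ p ∧ sim Su r q ∧ r ≠ q := by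
  cases h with
  | step _ _ _ _ h1 h2 h3 h4 =>
    refine ⟨h1, h2, h3, Or.inr h4, ?_⟩
    obtain ⟨τ, _, h5, h6⟩ := h4
    rw [← h5, ← h6]; exact τ.ne

lemma base_created {I₀ : Inst σ ℕ} {Su : Set (UID σ)} {a : ℕ} {q : σ.Pos}
    (h : Created I₀ Su (CEl.base a) q) :
    (∃ r, sim Su r q ∧ occursAt I₀ r a) ∧ ¬ occursAt I₀ q a := by
  cases h with
  | root _ _ h1 h2 =>
    obtain ⟨τ, h3, h4, h5⟩ := h1
    exact ⟨⟨τ.src, Or.inr ⟨τ, h3, rfl, h4⟩, h5⟩, h2⟩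

lemma trunc_ufd {I₀ : Inst σ ℕ} {Su : Set (UID σ)} (N : ℕ) {φ : UFD σ} (h : satUFD I₀ φ) :
    satUFD (trunc I₀ Su N) φ := by
  obtain ⟨R, u, v, huv⟩ := φ
  intro t s ht hs hts
  change t u = s u at hts
  change t v = s v
  have mixed : ∀ (t₀ : Fin (σ.ar R) → ℕ) (x : CEl σ) (i : Fin (σ.ar R)),
      (⟨R, t₀⟩ : Fact σ ℕ) ∈ I₀ → Created I₀ Su x ⟨R, i⟩ →
      CEl.base (t₀ u) = cval x ⟨R, i⟩ ⟨R, u⟩ → False := by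
    intro t₀ x i h0 hc he
    by_cases hui : (⟨R, u⟩ : σ.Pos) = ⟨R, i⟩
    · rw [hui, cval_self] at he
      subst he
      exact (base_created hc).2 (hui ▸ ⟨t₀, h0, rfl⟩)
    · rw [cval_ne _ hui] at he
      exact CEl.noConfusion rfl (heq_of_eq he)
  have cc : ∀ (x y : CEl σ) (i j : Fin (σ.ar R)), Created I₀ Su x ⟨R, i⟩ →
      (⟨R, u⟩ : σ.Pos) = ⟨R, i⟩ → (⟨R, u⟩ : σ.Pos) ≠ ⟨R, j⟩ →
      cval x ⟨R, i⟩ ⟨R, u⟩ = cval y ⟨R, j⟩ ⟨R, u⟩ → False := by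
    intro x y i j hc hi hj he
    rw [cval_ne _ hj, hi, cval_self] at he
    subst he
    exact (null_created hc).2.2.2.2 rfl
  rcases mem_trunc ht with ⟨t₀, h0, rfl⟩ | ⟨x, i, hx, hxd, rfl⟩ <;>
    rcases mem_trunc hs with ⟨s₀, h0', rfl⟩ | ⟨y, j, hy, hyd, rfl⟩
  · exact congrArg CEl.base (h t₀ s₀ h0 h0' (CEl.base.inj hts))
  · exact (mixed _ _ _ h0 hy hts).elim
  · exact (mixed _ _ _ h0' hx hts.symm).elim
  · by_cases hi : (⟨R, u⟩ : σ.Pos) = ⟨R, i⟩ <;> by_cases hj : (⟨R, u⟩ : σ.Pos) = ⟨R, j⟩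
    · have hij := hi.symm.trans hj
      have : x = y := by
        simp only [← hi, ← hj, cval_self] at hts
        exact hts
      simp only [hij, this]
    · exact (cc x y i j hx hi hj hts).elim
    · exact (cc y x j i hy hj hi hts.symm).elim
    · simp only [cval_ne _ hi, cval_ne _ hj] at hts
      injection hts with h1 h2 h3
      simp only [h1, h2]

lemma cval_depth (x : CEl σ) (p r : σ.Pos) :
    x.depth ≤ (cval x p r).depth ∧ (cval x p r).depth ≤ x.depth + 1 := by
  by_cases h : r = p
  · rw [h, cval_self]; omega
  · rw [cval_ne _ h]; simp only [CEl.depth]; omega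

lemma trunc_depth {I₀ : Inst σ ℕ} {Su : Set (UID σ)} {N : ℕ} {R : σ.Rel}
    {t : Fin (σ.ar R) → CEl σ} (h : (⟨R, t⟩ : Fact σ (CEl σ)) ∈ trunc I₀ Su N) (i j) :
    (t j).depth ≤ (t i).depth + 1 := by
  rcases mem_trunc h with ⟨t₀, h0, rfl⟩ | ⟨x, i', hx, hxd, rfl⟩
  · simp [CEl.depth]
  · have h1 := cval_depth x ⟨R, i'⟩ ⟨R, i⟩
    have h2 := cval_depth x ⟨R, i'⟩ ⟨R, j⟩
    dsimp only
    omega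

lemma trunc_null {I₀ : Inst σ ℕ} {Su : Set (UID σ)} {N : ℕ} {q p r : σ.Pos} {x : CEl σ}
    (h : occursAt (trunc I₀ Su N) q (CEl.null x p r)) :
    Created I₀ Su x p ∧ x.depth < N ∧ r.1 = p.1 ∧ r ≠ p ∧ sim Su r q := by
  obtain ⟨R, j⟩ := q
  obtain ⟨t, ht, htj⟩ := h
  rcases mem_trunc ht with ⟨t₀, h0, rfl⟩ | ⟨y, i, hy, hyd, rfl⟩
  · exact CEl.noConfusion rfl (heq_of_eq htj)
  · dsimp only at htj
    by_cases hij : (⟨R, j⟩ : σ.Pos) = ⟨R, i⟩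
    · rw [hij, cval_self] at htj
      subst htj
      obtain ⟨h1, h2, h3, h4, _⟩ := null_created hy
      simp only [CEl.depth] at hyd
      exact ⟨h1, by omega, h2, h3, hij ▸ h4⟩
    · rw [cval_ne _ hij] at htj
      injection htj with h1 h2 h3
      subst h1 h2 h3
      exact ⟨hy, hyd, rfl, hij, Or.inl rfl⟩

lemma trunc_base {I₀ : Inst σ ℕ} {Su : Set (UID σ)} {N : ℕ} {q : σ.Pos} {a : ℕ}
    (h : occursAt (trunc I₀ Su N) q (CEl.base a)) : ∃ r, sim Su r q ∧ occursAt I₀ r a := by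
  obtain ⟨R, j⟩ := q
  obtain ⟨t, ht, htj⟩ := h
  rcases mem_trunc ht with ⟨t₀, h0, rfl⟩ | ⟨y, i, hy, hyd, rfl⟩
  · exact ⟨_, Or.inl rfl, t₀, h0, CEl.base.inj htj⟩
  · dsimp only at htj
    by_cases hij : (⟨R, j⟩ : σ.Pos) = ⟨R, i⟩
    · rw [hij, cval_self] at htj
      subst htj
      exact hij ▸ (base_created hy).1
    · rw [cval_ne _ hij] at htj
      exact CEl.noConfusion rfl (heq_of_eq htj)

lemma trunc_occ_created {I₀ : Inst σ ℕ} {Su : Set (UID σ)} {N : ℕ} {p r : σ.Pos} {x : CEl σ}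
    (h : Created I₀ Su x p) (hd : x.depth < N) (hr : r.1 = p.1) :
    occursAt (trunc I₀ Su N) r (cval x p r) := by
  obtain ⟨R, i⟩ := p
  obtain ⟨R', j⟩ := r
  simp only at hr
  subst hr
  exact ⟨_, Or.inr ⟨x, _, h, hd, rfl⟩, rfl⟩

lemma trunc_sat {I₀ : Inst σ ℕ} {Su : Set (UID σ)} (ht : TransClosedUID Su) {N : ℕ}
    {q p : σ.Pos} {v : CEl σ}
    (h : occursAt (trunc I₀ Su N) q v) (hqp : sim Su q p) (hd : v.depth < N) :
    occursAt (trunc I₀ Su N) p v := by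
  cases v with
  | base a =>
    obtain ⟨r, hr, hra⟩ := trunc_base h
    by_cases hp : occursAt I₀ p a
    · obtain ⟨t, h1, h2⟩ := hp
      exact ⟨_, Or.inl ⟨_, h1, rfl⟩, by rw [← h2]⟩
    · rcases sim_trans ht hr hqp with rfl | ⟨τ, h1, h2, h3⟩
      · exact absurd hra hp
      · have hc : Created I₀ Su (CEl.base a) p := .root a p ⟨τ, h1, h3, h2 ▸ hra⟩ hp
        have := trunc_occ_created hc hd rfl
        rwa [cval_self] at this
  | null x p0 r =>
    obtain ⟨h1, h2, h3, h4, h5⟩ := trunc_null h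
    rcases sim_trans ht h5 hqp with rfl | h6
    · have := trunc_occ_created h1 h2 h3
      rwa [cval_ne _ h4] at this
    · have hc : Created I₀ Su (CEl.null x p0 r) p := .step x p0 r p h1 h3 h4 h6
      have := trunc_occ_created hc hd rfl
      rwa [cval_self] at this

/-! ### Homomorphism from the chase -/

open Classical in
noncomputable def homf (M : Inst σ ℕ) : CEl σ → ℕ
  | CEl.base a => a
  | CEl.null x p r =>
    if h : ∃ t : σ.Pos → ℕ, (⟨p.1, fun i => t ⟨p.1, i⟩⟩ : Fact σ ℕ) ∈ M ∧ t p = homf M x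
    then h.choose r else 0

lemma homf_spec {M : Inst σ ℕ} {x : CEl σ} {p : σ.Pos} (h : occursAt M p (homf M x)) :
    (⟨p.1, fun i => homf M (cval x p ⟨p.1, i⟩)⟩ : Fact σ ℕ) ∈ M := by
  classical
  have hex : ∃ t : σ.Pos → ℕ, (⟨p.1, fun i => t ⟨p.1, i⟩⟩ : Fact σ ℕ) ∈ M ∧
      t p = homf M x := by
    obtain ⟨R, i⟩ := p
    obtain ⟨s, hs, hsi⟩ := h
    refine ⟨fun r => if h : r.1 = R then s (Fin.cast (by rw [h]) r.2) else 0, ?_, ?_⟩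
    · simpa using hs
    · simpa using hsi
  convert hex.choose_spec.1 using 2
  ext i
  by_cases hi : (⟨p.1, i⟩ : σ.Pos) = p
  · rw [hi, cval_self]; exact hex.choose_spec.2.symm
  · rw [cval_ne _ hi, homf, dif_pos hex]

lemma homf_created {I₀ : Inst σ ℕ} {Su : Set (UID σ)} {M : Inst σ ℕ} (hM : I₀ ⊆ M)
    (hu : ∀ τ ∈ Su, satUID M τ) {x : CEl σ} {p : σ.Pos} (h : Created I₀ Su x p) :
    occursAt M p (homf M x) := by
  induction h with
  | root a p h _ =>
    obtain ⟨τ, h1, rfl, t, ht, hta⟩ := h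
    exact hu τ h1 _ ⟨t, hM ht, by rw [hta, homf]⟩
  | step x p r q _ h1 h2 h3 ih =>
    obtain ⟨τ, h4, rfl, rfl⟩ := h3
    apply hu τ h4
    have h5 := homf_spec ih
    rw [← cval_ne x h2]
    generalize τ.src = r at *
    obtain ⟨R, i⟩ := p
    obtain ⟨R', j⟩ := r
    simp only at h1
    subst h1
    exact ⟨_, h5, rfl⟩

lemma homf_trunc {I₀ : Inst σ ℕ} {Su : Set (UID σ)} {M : Inst σ ℕ} (hM : I₀ ⊆ M)
    (hu : ∀ τ ∈ Su, satUID M τ) {N : ℕ} {R : σ.Rel} {t : Fin (σ.ar R) → CEl σ}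
    (h : (⟨R, t⟩ : Fact σ (CEl σ)) ∈ trunc I₀ Su N) :
    (⟨R, fun i => homf M (t i)⟩ : Fact σ ℕ) ∈ M := by
  rcases mem_trunc h with ⟨t₀, h0, rfl⟩ | ⟨y, i, hy, hyd, rfl⟩
  · simpa only [homf] using hM h0
  · exact homf_spec (homf_created hM hu hy)

lemma useful_nonempty {I₀ : Inst σ ℕ} {Su : Set (UID σ)} {M : Inst σ ℕ} (hM : I₀ ⊆ M)
    (hu : ∀ τ ∈ Su, satUID M τ) {R : σ.Rel} {t : Fin (σ.ar R) → CEl σ}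
    (h : (⟨R, t⟩ : Fact σ (CEl σ)) ∈ chaseInst I₀ Su) :
    ∃ s, (⟨R, s⟩ : Fact σ ℕ) ∈ M := by
  rcases h with ⟨⟨R₀, t₀⟩, h0, h1⟩ | ⟨x, ⟨R', i⟩, h0, h1⟩
  · cases h1
    exact ⟨t₀, hM h0⟩
  · cases h1
    exact ⟨_, homf_spec (homf_created hM hu h0)⟩

/-! ### Transfer along an injection -/

def mapInst {γ δ : Type} (g : γ → δ) (I : Inst σ γ) : Inst σ δ :=
  (fun F : Fact σ γ => (⟨F.1, fun i => g (F.2 i)⟩ : Fact σ δ)) '' I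

lemma mem_mapInst {γ δ : Type} {g : γ → δ} {I : Inst σ γ} {R : σ.Rel} {t : Fin (σ.ar R) → δ}
    (h : (⟨R, t⟩ : Fact σ δ) ∈ mapInst g I) :
    ∃ s, (⟨R, s⟩ : Fact σ γ) ∈ I ∧ t = fun i => g (s i) := by
  obtain ⟨⟨R', s⟩, hs, he⟩ := h
  cases he
  exact ⟨s, hs, rfl⟩

lemma mapInst_uid {γ δ : Type} {g : γ → δ} {I : Inst σ γ} {τ : UID σ}
    (h : satUID I τ) : satUID (mapInst g I) τ := by
  rintro a ⟨t, ht, rfl⟩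
  obtain ⟨s, hs, rfl⟩ := mem_mapInst ht
  obtain ⟨u, hu, hu'⟩ := h _ ⟨s, hs, rfl⟩
  exact ⟨_, ⟨_, hu, rfl⟩, by simp only [hu']⟩

lemma mapInst_ufd {γ δ : Type} {g : γ → δ} {I : Inst σ γ} (hg : Set.InjOn g (activeDom I))
    {φ : UFD σ} (h : satUFD I φ) : satUFD (mapInst g I) φ := by
  intro t u ht hu htu
  obtain ⟨t', ht', rfl⟩ := mem_mapInst ht
  obtain ⟨u', hu', rfl⟩ := mem_mapInst hu
  exact congrArg g (h t' u' ht' hu' (hg ⟨_, ht', _, rfl⟩ ⟨_, hu', _, rfl⟩ htu))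

lemma mapInst_cq {γ δ : Type} {g : γ → δ} {I : Inst σ γ} (hg : Set.InjOn g (activeDom I))
    {q : CQ σ} (h : satCQ (mapInst g I) q) : satCQ I q := by
  obtain ⟨f, hf⟩ := h
  have hx : ∀ x, ∃ v ∈ activeDom I, g v = f x := by
    intro x
    obtain ⟨A, hA, i, rfl⟩ := q.vars_occur x
    obtain ⟨s, hs, he⟩ := mem_mapInst (hf A hA)
    exact ⟨s i, ⟨_, hs, i, rfl⟩, (congrFun he i).symm⟩
  choose f' hf' hgf using hx
  refine ⟨f', fun A hA => ?_⟩
  obtain ⟨s, hs, he⟩ := mem_mapInst (hf A hA)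
  convert hs using 2
  ext i
  exact hg (hf' _) ⟨_, hs, i, rfl⟩ (by rw [hgf]; exact congrFun he i)

lemma exists_embed {β : Type} (S : Set (CEl σ ⊕ β)) (hS : S.Finite) :
    ∃ g : CEl σ ⊕ β → ℕ, Set.InjOn g S ∧ ∀ a, g (Sum.inl (CEl.base a)) = a := by
  classical
  have hinjb : Function.Injective (fun a : ℕ => (Sum.inl (CEl.base a) : CEl σ ⊕ β)) := by
    intro a b h
    exact CEl.base.inj (Sum.inl.inj h)
  obtain ⟨B, hB⟩ := (hS.preimage (hinjb.injOn) :
    ((fun a : ℕ => (Sum.inl (CEl.base a) : CEl σ ⊕ β)) ⁻¹' S).Finite).bddAbove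
  have := hS.countable.to_subtype
  obtain ⟨f, hf⟩ := exists_injective_nat S
  let g : CEl σ ⊕ β → ℕ := fun v =>
    if h : ∃ a, v = Sum.inl (CEl.base a) then h.choose
    else if h' : v ∈ S then B + 1 + f ⟨v, h'⟩ else 0
  have hg0 : ∀ a, g (Sum.inl (CEl.base a)) = a := by
    intro a
    have hex : ∃ b, (Sum.inl (CEl.base a) : CEl σ ⊕ β) = Sum.inl (CEl.base b) := ⟨a, rfl⟩
    simp only [g]
    rw [dif_pos hex]
    exact (hinjb hex.choose_spec).symm
  have hg1 : ∀ v (h : v ∈ S), (¬ ∃ a, v = Sum.inl (CEl.base a)) → g v = B + 1 + f ⟨v, h⟩ := by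
    intro v h hn
    simp only [g, dif_neg hn, dif_pos h]
  refine ⟨g, ?_, hg0⟩
  intro v hv w hw hvw
  by_cases h1 : ∃ a, v = Sum.inl (CEl.base a) <;> by_cases h2 : ∃ a, w = Sum.inl (CEl.base a)
  · obtain ⟨a, rfl⟩ := h1
    obtain ⟨b, rfl⟩ := h2
    rw [hg0, hg0] at hvw
    rw [hvw]
  · obtain ⟨a, rfl⟩ := h1
    rw [hg0, hg1 w hw h2] at hvw
    have := hB hv
    omega
  · obtain ⟨b, rfl⟩ := h2
    rw [hg0, hg1 v hv h1] at hvw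
    have := hB hw
    omega
  · rw [hg1 v hv h1, hg1 w hw h2] at hvw
    exact congrArg Subtype.val (hf (Nat.add_left_cancel hvw))

/-- **k-universal models for reversible constraints.** For reversible UIDs `Su` and
UFDs `Sf` (with no useless relations: every relation occurs in the UID chase of `I₀`
by `Su`), every finite instance `I₀` satisfying `Sf` has a finite superinstance that
satisfies `Su ∪ Sf` and is `k`-sound for `Su ∪ Sf`, `I₀` and the class of acyclic
Boolean CQs. -/
theorem k_universal_models_reversible
    {σ : Sig} (Su : Set (UID σ)) (Sf : Set (UFD σ))
    (hrev : Reversible Su Sf) (k : ℕ)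
    (I₀ : Inst σ ℕ) (hfin : I₀.Finite)
    (hsat : ∀ φ ∈ Sf, satUFD I₀ φ)
    (huseful : ∀ R : σ.Rel, ∃ t : Fin (σ.ar R) → CEl σ,
        (⟨R, t⟩ : Fact σ (CEl σ)) ∈ chaseInst I₀ Su) :
    ∃ I : Inst σ ℕ, I₀ ⊆ I ∧ I.Finite ∧ satAllU I Su Sf ∧
      ∀ q : CQ σ, IsACQ q → q.size ≤ k → satCQ I q → unrEntailsU I₀ Su Sf q := by
  classical
  obtain ⟨htu, htf, hru, hrf⟩ := id hrev
  have hRel := σ.rel_fin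
  set N := k + 1 with hN
  set J := trunc I₀ Su N with hJ
  let tmp : ∀ R : σ.Rel, Fin (σ.ar R) → CEl σ ⊕ (Set σ.Pos × ℕ) :=
    fun R i => Sum.inr (cls Su ⟨R, i⟩, 0)
  let fl : Set σ.Pos → ℕ → CEl σ ⊕ (Set σ.Pos × ℕ) := fun c n => Sum.inr (c, n + 1)
  let K : Inst σ (CEl σ ⊕ (Set σ.Pos × ℕ)) :=
    mapInst Sum.inl J ∪ Set.range (fun R => (⟨R, tmp R⟩ : Fact σ _))
  have hKmem : ∀ R t, (⟨R, t⟩ : Fact σ (CEl σ ⊕ (Set σ.Pos × ℕ))) ∈ K →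
      (∃ s, (⟨R, s⟩ : Fact σ (CEl σ)) ∈ J ∧ t = fun i => Sum.inl (s i)) ∨ t = tmp R := by
    rintro R t (h | ⟨R', h⟩)
    · exact Or.inl (mem_mapInst h)
    · cases h
      exact Or.inr rfl
  have hKfin : K.Finite := ((trunc_finite hfin Su N).image _).union (Set.finite_range _)
  have hKf : ∀ φ ∈ Sf, satUFD K φ := by
    intro φ hφ t s ht hs hts
    rcases hKmem _ _ ht with ⟨t', ht', rfl⟩ | rfl <;>
      rcases hKmem _ _ hs with ⟨s', hs', rfl⟩ | rfl
    · exact congrArg Sum.inl (trunc_ufd N (hsat φ hφ) t' s' ht' hs' (Sum.inl.inj hts))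
    · cases hts
    · cases hts
    · rfl
  obtain ⟨I, hKI, hIfin, hIu, hIf, hIs⟩ := completion hrev K hKfin hKf tmp
    (fun R => Or.inr ⟨R, rfl⟩) fl
    (fun c a b h => by
      have := congrArg Prod.snd (Sum.inr.inj h)
      simpa using this)
    (by
      rintro c n ⟨⟨R, t⟩, hF, i, hi⟩
      rcases hKmem _ _ hF with ⟨s, hs, rfl⟩ | rfl
      · cases hi
      · have := congrArg Prod.snd (Sum.inr.inj hi)
        simp at this)
  -- occurrences in K
  have hKocc : ∀ p v, occursAt K p v →
      (∃ w, v = Sum.inl w ∧ occursAt J p w) ∨ v = Sum.inr (cls Su p, 0) := by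
    rintro ⟨R, i⟩ v ⟨t, ht, rfl⟩
    rcases hKmem _ _ ht with ⟨s, hs, rfl⟩ | rfl
    · exact Or.inl ⟨s i, rfl, s, hs, rfl⟩
    · exact Or.inr rfl
  have hKocc' : ∀ p w, occursAt J p w → occursAt K p (Sum.inl w) := by
    rintro ⟨R, i⟩ w ⟨t, ht, rfl⟩
    exact ⟨_, Or.inl ⟨_, ht, rfl⟩, rfl⟩
  let dep : CEl σ ⊕ (Set σ.Pos × ℕ) → ℕ := Sum.elim CEl.depth (fun _ => N)
  -- facts of I
  have hIdep : ∀ R t, (⟨R, t⟩ : Fact σ _) ∈ I →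
      (∃ s, (⟨R, s⟩ : Fact σ (CEl σ)) ∈ J ∧ t = fun i => Sum.inl (s i)) ∨
      ∀ i, N ≤ dep (t i) := by
    intro R t ht
    rcases hIs R t ht with h | h
    · rcases hKmem _ _ h with h | rfl
      · exact Or.inl h
      · exact Or.inr fun i => le_rfl
    · right
      intro i
      rcases h i with h | ⟨n, h⟩ | ⟨h1, q, h2, h3⟩
      · rw [h]; exact le_rfl
      · rw [h]; exact le_rfl
      · rcases hKocc _ _ h3 with ⟨w, hw, hw'⟩ | hw
        · rw [hw] at h1 ⊢
          by_contra hlt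
          exact h1 (hKocc' _ _ (trunc_sat htu hw' h2 (not_le.1 hlt)))
        · rw [hw]; exact le_rfl
  have hIcls : ∀ p v, occursAt I p v →
      (∃ w, v = Sum.inl w ∧ ∃ q, sim Su q p ∧ occursAt J q w) ∨
      ∃ n, v = Sum.inr (cls Su p, n) := by
    have hK' : ∀ p q v, sim Su q p → occursAt K q v →
        (∃ w, v = Sum.inl w ∧ ∃ q, sim Su q p ∧ occursAt J q w) ∨
        ∃ n, v = Sum.inr (cls Su p, n) := by
      intro p q v hqp h
      rcases hKocc _ _ h with ⟨w, hw, hw'⟩ | hw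
      · exact Or.inl ⟨w, hw, q, hqp, hw'⟩
      · exact Or.inr ⟨0, by rw [hw, (cls_eq_iff htu hru).2 hqp]⟩
    rintro ⟨R, i⟩ v ⟨t, ht, rfl⟩
    rcases hIs R t ht with h | h
    · exact hK' _ _ _ (Or.inl rfl) ⟨t, h, rfl⟩
    · rcases h i with h | ⟨n, h⟩ | ⟨h1, q, h2, h3⟩
      · exact Or.inr ⟨0, h⟩
      · exact Or.inr ⟨n + 1, h⟩
      · exact hK' _ _ _ h2 h3
  have hIwc : ∀ p q v, occursAt I p v → occursAt I q v → 0 < dep v → sim Su p q := by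
    intro p q v hp hq hd
    rcases hIcls p v hp with ⟨w, rfl, p', hpp, hw⟩ | ⟨n, rfl⟩
    · rcases hIcls q _ hq with ⟨w', hw', q', hqq, hw''⟩ | ⟨n, h⟩
      · cases hw'
        cases w with
        | base a => exact absurd hd (lt_irrefl 0)
        | null x p0 r =>
          have h1 := sim_trans htu (trunc_null hw).2.2.2.2 hpp
          have h2 := sim_trans htu (trunc_null hw'').2.2.2.2 hqq
          exact sim_trans htu (sim_symm hru h1) h2
      · cases h
    · rcases hIcls q _ hq with ⟨w', hw', q', hqq, hw''⟩ | ⟨n', h⟩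
      · cases hw'
      · exact (cls_eq_iff htu hru).1 (congrArg Prod.fst (Sum.inr.inj h))
  -- transfer
  obtain ⟨g, hg, hg0⟩ := exists_embed (activeDom I) (activeDom_finite hIfin)
  refine ⟨mapInst g I, ?_, hIfin.image _, ⟨fun τ hτ => mapInst_uid (hIu τ hτ),
    fun φ hφ => mapInst_ufd hg (hIf φ hφ)⟩, ?_⟩
  · rintro ⟨R, t⟩ ht
    refine ⟨⟨R, fun i => Sum.inl (CEl.base (t i))⟩, hKI (Or.inl ⟨⟨R, fun i => CEl.base (t i)⟩,
      Or.inl ⟨_, ht, rfl⟩, rfl⟩), ?_⟩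
    simp only [hg0]
  intro q hq hqk hqI M hM hMs
  obtain ⟨h, hh⟩ := mapInst_cq hg hqI
  have hne : ∀ R, ∃ t, (⟨R, t⟩ : Fact σ ℕ) ∈ M := fun R => by
    obtain ⟨t, ht⟩ := huseful R
    exact useful_nonempty hM hMs.1 ht
  -- a cut level
  have hcut : ∃ d, 1 ≤ d ∧ d ≤ N ∧ ∀ A ∈ q.atoms, ∀ i j,
      dep (h (A.2 i)) < d → dep (h (A.2 j)) < d := by
    by_contra hcon
    push Not at hcon
    have hch : ∀ d : Fin N, ∃ a : Fin q.atoms.length, ∃ i j,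
        dep (h ((q.atoms.get a).2 i)) < d + 1 ∧ d + 1 ≤ dep (h ((q.atoms.get a).2 j)) := by
      intro d
      obtain ⟨A, hA, i, j, h1, h2⟩ := hcon (d + 1) (by omega) (by omega)
      obtain ⟨a, rfl⟩ := List.get_of_mem hA
      exact ⟨a, i, j, h1, h2⟩
    choose f fi fj hf1 hf2 using hch
    have hstep : ∀ d d' : Fin N, f d = f d' → (d' : ℕ) ≤ d := by
      intro d d' hdd
      have h1 := hf1 d
      have h2 := hf2 d'
      generalize fi d = i at h1
      generalize fj d' = j at h2
      revert i j
      rw [← hdd]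
      intro i h1 j h2
      rcases hIdep _ _ (hh _ (List.get_mem q.atoms (f d))) with ⟨s, hs, he⟩ | hge
      · have hi := congrFun he i
        have hj := congrFun he j
        rw [hi] at h1
        rw [hj] at h2
        have h3 := trunc_depth hs i j
        simp only [dep, Sum.elim_inl] at h1 h2
        omega
      · have := hge i
        have := d.2
        omega
    have hinj : Function.Injective f := fun d d' hdd =>
      Fin.ext (le_antisymm (hstep _ _ hdd.symm) (hstep _ _ hdd))
    have := Fintype.card_le_of_injective f hinj
    simp only [Fintype.card_fin] at this
    have : q.atoms.length ≤ k := hqk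
    omega
  obtain ⟨d, hd1, hdN, hcut⟩ := hcut
  let S : Finset (Fin q.atoms.length) :=
    Finset.univ.filter (fun a => ∀ i, d ≤ dep (h ((q.atoms.get a).2 i)))
  obtain ⟨g', hg'⟩ := acyclic_hom (fun a => q.atoms.get a) hq.1
    (fun a => hq.2 _ (List.get_mem _ _)) Su M hMs.1 hne S (by
      intro a ha b hb i j hij
      have ha' := (Finset.mem_filter.1 ha).2
      apply hIwc _ _ (h ((q.atoms.get a).2 i)) ⟨_, hh _ (List.get_mem q.atoms a), rfl⟩
      · rw [hij]
        exact ⟨_, hh _ (List.get_mem q.atoms b), rfl⟩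
      · exact lt_of_lt_of_le hd1 (ha' i))
  refine ⟨fun x => if dep (h x) < d then Sum.elim (homf M) (fun _ => 0) (h x) else g' x, ?_⟩
  intro A hA
  by_cases hlow : ∃ i, dep (h (A.2 i)) < d
  · obtain ⟨i, hi⟩ := hlow
    have hall : ∀ j, dep (h (A.2 j)) < d := fun j => hcut A hA i j hi
    simp only [hall, if_true]
    rcases hIdep _ _ (hh A hA) with ⟨s, hs, he⟩ | hge
    · have := homf_trunc hM hMs.1 hs
      convert this using 2
      ext j
      have hj := congrFun he j
      simp only [hj, Sum.elim_inl]
    · have := hge i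
      omega
  · push Not at hlow
    obtain ⟨a, rfl⟩ := List.get_of_mem hA
    have := hg' a (Finset.mem_filter.2 ⟨Finset.mem_univ _, hlow⟩)
    have hn : ∀ j, ¬ dep (h ((q.atoms.get a).2 j)) < d := fun j => not_lt.2 (hlow j)
    simp only [hn, if_false]
    exact this

end FQA
end

section
/- (k-universal models for finitely closed UIDs and UFDs) Let Σ be a finite set of UIDs Σ_UID and UFDs Σ_UFD closed under finite implication, let k ∈ ℕ, and let I₀ be a finite instance satisfying Σ_UFD. Then there exists a finite superinstance I of I₀ that satisfies Σ and is k-sound for Σ, I₀, and the class ACQ of acyclic Boolean CQs (hence a finite k-universal model for ACQs). -/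
namespace FQA

variable {σ : Sig} {α β : Type}

section Aux

lemma pos_ne {v : σ.Pos} {i : Fin (σ.ar v.1)} (h : i ≠ v.2) : (⟨v.1, i⟩ : σ.Pos) ≠ v := by
  obtain ⟨R, j⟩ := v
  intro e
  cases e
  exact h rfl

instance instFinRel (σ : Sig) : Finite σ.Rel := σ.rel_fin

def mapF (f : α → β) (F : Fact σ α) : Fact σ β := ⟨F.1, fun i => f (F.2 i)⟩

def Ty (σ : Sig) : ℕ → Type
  | 0 => Unit
  | n + 1 => Set (Σ p : σ.Pos, (Fin (σ.ar p.1) → Ty σ n))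

instance instFinTy (σ : Sig) : (n : ℕ) → Finite (Ty σ n)
  | 0 => inferInstanceAs (Finite Unit)
  | n + 1 =>
    haveI := instFinTy σ n
    inferInstanceAs (Finite (Set (Σ p : σ.Pos, (Fin (σ.ar p.1) → Ty σ n))))

def Wants (le : σ.Pos → σ.Pos → Prop) (I₀ : Inst σ ℕ) : CEl σ → σ.Pos → Prop
  | .base a, v => ∃ p, le p v ∧ occursAt I₀ p a
  | .null x p r, v => Wants le I₀ x p ∧ r.1 = p.1 ∧ r ≠ p ∧ le r v

def chT (x : CEl σ) (v : σ.Pos) : Fin (σ.ar v.1) → CEl σ :=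
  fun i => if i = v.2 then x else CEl.null x v ⟨v.1, i⟩

def Mi (le : σ.Pos → σ.Pos → Prop) (I₀ : Inst σ ℕ) : Inst σ (CEl σ) :=
  {F | (∃ F₀ ∈ I₀, F = mapF CEl.base F₀) ∨ ∃ x v, Wants le I₀ x v ∧ F = ⟨v.1, chT x v⟩}

def ty (M : Inst σ (CEl σ)) : (n : ℕ) → CEl σ → Ty σ n
  | 0, _ => ()
  | n + 1, x => show Set (Σ p : σ.Pos, (Fin (σ.ar p.1) → Ty σ n)) from
     {w | ∃ t, (⟨w.1.1, t⟩ : Fact σ (CEl σ)) ∈ M ∧ t w.1.2 = x ∧ w.2 = fun i => ty M n (t i)}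

def Sb (M : Inst σ (CEl σ)) (n : ℕ) (x y : CEl σ) : Prop :=
  ∀ (p : σ.Pos) (t : Fin (σ.ar p.1) → CEl σ), (⟨p.1, t⟩ : Fact σ (CEl σ)) ∈ M → t p.2 = x →
    ∃ t', (⟨p.1, t'⟩ : Fact σ (CEl σ)) ∈ M ∧ t' p.2 = y ∧ ∀ i, ty M n (t i) = ty M n (t' i)

lemma ty_succ_iff (M : Inst σ (CEl σ)) (n : ℕ) (x y : CEl σ) :
    ty M (n+1) x = ty M (n+1) y ↔ Sb M n x y ∧ Sb M n y x := by
  have key : ∀ x y : CEl σ, (∀ w, w ∈ (show Set (Σ p : σ.Pos, (Fin (σ.ar p.1) → Ty σ n)) from ty M (n+1) x) →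
      w ∈ (show Set (Σ p : σ.Pos, (Fin (σ.ar p.1) → Ty σ n)) from ty M (n+1) y)) ↔ Sb M n x y := by
    intro x y
    constructor
    · intro h p t ht hx
      obtain ⟨t', h1, h2, h3⟩ := h ⟨p, fun i => ty M n (t i)⟩ ⟨t, ht, hx, rfl⟩
      exact ⟨t', h1, h2, fun i => congrFun h3 i⟩
    · rintro h ⟨p, u⟩ ⟨t, ht, hx, hu⟩
      obtain ⟨t', h1, h2, h3⟩ := h p t ht hx
      refine ⟨t', h1, h2, ?_⟩
      rw [hu]; funext i; exact h3 i
  rw [← key, ← key]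
  constructor
  · intro h; rw [h]; simp
  · rintro ⟨h1, h2⟩
    exact Set.ext (a := (show Set (Σ p : σ.Pos, (Fin (σ.ar p.1) → Ty σ n)) from ty M (n+1) x))
      fun w => ⟨h1 w, h2 w⟩

lemma ty_pred (M : Inst σ (CEl σ)) : ∀ (n : ℕ) (x y : CEl σ),
    ty M (n+1) x = ty M (n+1) y → ty M n x = ty M n y := by
  intro n
  induction n with
  | zero => intros; rfl
  | succ n ih =>
    have : ∀ x y, Sb M (n+1) x y → Sb M n x y := by
      intro x y h p t ht hx
      obtain ⟨t', h1, h2, h3⟩ := h p t ht hx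
      exact ⟨t', h1, h2, fun i => ih _ _ (h3 i)⟩
    intro x y h
    rw [ty_succ_iff] at h ⊢
    exact ⟨this _ _ h.1, this _ _ h.2⟩

lemma ty_mono (M : Inst σ (CEl σ)) {m n : ℕ} (h : m ≤ n) (x y : CEl σ) :
    ty M n x = ty M n y → ty M m x = ty M m y := by
  induction h with
  | refl => exact id
  | step _ ih => exact fun h => ih (ty_pred M _ _ _ h)

variable {le : σ.Pos → σ.Pos → Prop} {I₀ : Inst σ ℕ}

lemma wants_up (tr : ∀ a b c, le a b → le b c → le a c) {x : CEl σ} {p q : σ.Pos}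
    (h : Wants le I₀ x p) (hpq : le p q) : Wants le I₀ x q := by
  cases x with
  | base a => obtain ⟨r, h1, h2⟩ := h; exact ⟨r, tr _ _ _ h1 hpq, h2⟩
  | null x p' r => exact ⟨h.1, h.2.1, h.2.2.1, tr _ _ _ h.2.2.2 hpq⟩

lemma occ_wants (rf : ∀ a, le a a) {p : σ.Pos} {t : Fin (σ.ar p.1) → CEl σ}
    (ht : (⟨p.1, t⟩ : Fact σ (CEl σ)) ∈ Mi le I₀) : Wants le I₀ (t p.2) p := by
  obtain ⟨R, i⟩ := p
  rcases ht with ⟨⟨R', t'⟩, hF, h⟩ | ⟨x, v, hw, h⟩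
  · cases h
    exact ⟨⟨R, i⟩, rf _, _, hF, rfl⟩
  · cases h
    simp only [chT]
    split_ifs with hi
    · subst hi; exact hw
    · exact ⟨hw, rfl, pos_ne hi, rf _⟩

lemma chT_self (x : CEl σ) (v : σ.Pos) : chT x v v.2 = x := by simp [chT]
lemma chT_ne (x : CEl σ) (v : σ.Pos) {i} (h : i ≠ v.2) : chT x v i = .null x v ⟨v.1, i⟩ := by
  simp [chT, h]
lemma chT_mem {x : CEl σ} {v : σ.Pos} (h : Wants le I₀ x v) :
    (⟨v.1, chT x v⟩ : Fact σ (CEl σ)) ∈ Mi le I₀ := Or.inr ⟨x, v, h, rfl⟩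

/-- facts containing a null -/
lemma null_facts {x : CEl σ} {p r v : σ.Pos} {t : Fin (σ.ar v.1) → CEl σ}
    (ht : (⟨v.1, t⟩ : Fact σ (CEl σ)) ∈ Mi le I₀) (h : t v.2 = .null x p r) :
    (Wants le I₀ (.null x p r) v ∧ t = chT (.null x p r) v) ∨
    (Wants le I₀ x p ∧ r = v ∧ ∃ i, v = ⟨p.1, i⟩ ∧ i ≠ p.2 ∧
      (⟨v.1, t⟩ : Fact σ (CEl σ)) = ⟨p.1, chT x p⟩) := by
  obtain ⟨R, i⟩ := v
  rcases ht with ⟨⟨R', t'⟩, hF, h'⟩ | ⟨y, w, hw, h'⟩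
  · cases h'; simp at h
  · cases h'
    by_cases hi : i = w.2
    · left
      subst hi
      have : y = .null x p r := by simpa [chT] using h
      subst this
      exact ⟨hw, rfl⟩
    · right
      rw [show chT y w i = _ from chT_ne y w hi] at h
      injection h with h1 h2 h3
      subst h1 h2 h3
      exact ⟨hw, rfl, i, rfl, hi, rfl⟩

lemma Sb_null {n : ℕ} {x : CEl σ} {p : σ.Pos} {i : Fin (σ.ar p.1)} {y : CEl σ}
    (h1 : ∀ v, le ⟨p.1, i⟩ v → ∃ t', (⟨v.1, t'⟩ : Fact σ (CEl σ)) ∈ Mi le I₀ ∧ t' v.2 = y ∧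
      ∀ j, ty (Mi le I₀) n (chT (.null x p ⟨p.1, i⟩) v j) = ty (Mi le I₀) n (t' j))
    (h2 : ∃ t', (⟨p.1, t'⟩ : Fact σ (CEl σ)) ∈ Mi le I₀ ∧ t' i = y ∧
      ∀ j, ty (Mi le I₀) n (chT x p j) = ty (Mi le I₀) n (t' j)) :
    Sb (Mi le I₀) n (.null x p ⟨p.1, i⟩) y := by
  intro v t ht hx
  rcases null_facts ht hx with ⟨hw, rfl⟩ | ⟨hw, hr, i', rfl, hi', he⟩
  · exact h1 v hw.2.2.2
  · cases hr
    cases he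
    exact h2

lemma ty_congr (n : ℕ) :
    ∀ (z z' : CEl σ) (v : σ.Pos) (i : Fin (σ.ar v.1)), i ≠ v.2 → Wants le I₀ z v →
    Wants le I₀ z' v → ty (Mi le I₀) n z = ty (Mi le I₀) n z' →
    ty (Mi le I₀) n (.null z v ⟨v.1, i⟩) = ty (Mi le I₀) n (.null z' v ⟨v.1, i⟩) := by
  induction n with
  | zero => intros; rfl
  | succ n ih =>
    have key : ∀ (z z' : CEl σ) (v : σ.Pos) (i : Fin (σ.ar v.1)), i ≠ v.2 → Wants le I₀ z v →
      Wants le I₀ z' v → ty (Mi le I₀) n z = ty (Mi le I₀) n z' →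
      Sb (Mi le I₀) n (.null z v ⟨v.1, i⟩) (.null z' v ⟨v.1, i⟩) := by
      intro z z' v i hi hz hz' he
      have hv : (⟨v.1, i⟩ : σ.Pos) ≠ v := pos_ne hi
      apply Sb_null
      · intro w hw
        have w1 : Wants le I₀ (.null z v ⟨v.1, i⟩) w := ⟨hz, rfl, hv, hw⟩
        have w2 : Wants le I₀ (.null z' v ⟨v.1, i⟩) w := ⟨hz', rfl, hv, hw⟩
        refine ⟨_, chT_mem w2, chT_self _ _, fun j => ?_⟩
        by_cases hj : j = w.2
        · subst hj; rw [chT_self, chT_self]; exact ih _ _ _ _ hi hz hz' he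
        · rw [chT_ne _ _ hj, chT_ne _ _ hj]
          exact ih _ _ _ _ hj w1 w2 (ih _ _ _ _ hi hz hz' he)
      · refine ⟨_, chT_mem hz', chT_ne _ _ hi, fun j => ?_⟩
        by_cases hj : j = v.2
        · subst hj; rw [chT_self, chT_self]; exact he
        · rw [chT_ne _ _ hj, chT_ne _ _ hj]
          exact ih _ _ _ _ hj hz hz' he
    intro z z' v i hi hz hz' he
    have he' := ty_pred _ _ _ _ he
    rw [ty_succ_iff]
    exact ⟨key _ _ _ _ hi hz hz' he', key _ _ _ _ hi hz' hz he'.symm⟩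

/-- genericity -/
def Lv (le : σ.Pos → σ.Pos → Prop) (I₀ : Inst σ ℕ) : ℕ → CEl σ → σ.Pos → Prop
  | 0, z, p => Wants le I₀ z p
  | n + 1, z, p => ∃ x q, ∃ i : Fin (σ.ar q.1), i ≠ q.2 ∧ z = .null x q ⟨q.1, i⟩ ∧
      le ⟨q.1, i⟩ p ∧ le p ⟨q.1, i⟩ ∧ Lv le I₀ n x q

lemma Lv_wants {n : ℕ} : ∀ {z : CEl σ} {p : σ.Pos}, Lv le I₀ n z p → Wants le I₀ z p := by
  induction n with
  | zero => exact fun h => h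
  | succ n ih =>
    rintro z p ⟨x, q, i, hi, rfl, h1, h2, h3⟩
    exact ⟨ih h3, rfl, pos_ne hi, h1⟩

lemma Lv_pred {n : ℕ} : ∀ {z : CEl σ} {p : σ.Pos}, Lv le I₀ (n+1) z p → Lv le I₀ n z p := by
  induction n with
  | zero => exact fun h => Lv_wants h
  | succ n ih =>
    rintro z p ⟨x, q, i, hi, rfl, h1, h2, h3⟩
    exact ⟨x, q, i, hi, rfl, h1, h2, ih h3⟩

lemma Lv_equiv (tr : ∀ a b c, le a b → le b c → le a c) {n : ℕ} {z : CEl σ} {p p' : σ.Pos}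
    (h : Lv le I₀ n z p) (h1 : le p p') (h2 : le p' p) : Lv le I₀ n z p' := by
  cases n with
  | zero => exact wants_up tr h h1
  | succ n =>
    obtain ⟨x, q, i, hi, rfl, h3, h4, h5⟩ := h
    exact ⟨x, q, i, hi, rfl, tr _ _ _ h3 h1, tr _ _ _ h2 h4, h5⟩

lemma Lv_null (rf : ∀ a, le a a) {n : ℕ} {x : CEl σ} {p : σ.Pos} {i : Fin (σ.ar p.1)}
    (hi : i ≠ p.2) (h : Lv le I₀ n x p) : Lv le I₀ (n+1) (.null x p ⟨p.1, i⟩) ⟨p.1, i⟩ :=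
  ⟨x, p, i, hi, rfl, rf _, rf _, h⟩

lemma Lv_ty (rf : ∀ a, le a a) (tr : ∀ a b c, le a b → le b c → le a c) (n : ℕ) :
    ∀ (z z' : CEl σ) (r : σ.Pos), Lv le I₀ (n+1) z r → Lv le I₀ (n+1) z' r →
      ty (Mi le I₀) n z = ty (Mi le I₀) n z' := by
  induction n with
  | zero => intros; rfl
  | succ n ih =>
    have key : ∀ (z z' : CEl σ) (r : σ.Pos), Lv le I₀ (n+2) z r → Lv le I₀ (n+2) z' r →
        Sb (Mi le I₀) n z z' := by
      intro z z' r hz hz'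
      have hzz := ih z z' r (Lv_pred hz) (Lv_pred hz')
      have hzw := hz
      obtain ⟨x, ⟨R, p⟩, i, hi, rfl, h1, h2, h3⟩ := hz
      dsimp only at *
      apply Sb_null
      · intro v hv
        dsimp only at *
        have w1 : Wants le I₀ (.null x ⟨R, p⟩ ⟨R, i⟩) v := wants_up tr (Lv_wants hzw) (tr _ _ _ h2 hv)
        have w2 : Wants le I₀ z' v := wants_up tr (Lv_wants hz') (tr _ _ _ h2 hv)
        refine ⟨_, chT_mem w2, chT_self _ _, fun j => ?_⟩
        by_cases hj : j = v.2
        · subst hj; rw [chT_self, chT_self]; exact hzz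
        · rw [chT_ne _ _ hj, chT_ne _ _ hj]
          exact ty_congr n _ _ _ _ hj w1 w2 hzz
      · have hz1 : Lv le I₀ n z' ⟨R, i⟩ := Lv_equiv tr (Lv_pred (Lv_pred hz')) h2 h1
        refine ⟨chT z' ⟨R, i⟩, chT_mem (v := ⟨R, i⟩) (Lv_wants hz1), chT_self _ _, fun j => ?_⟩
        by_cases hj : j = p
        · rw [hj, show chT x ⟨R, p⟩ p = x from chT_self x ⟨R, p⟩, chT_ne _ ⟨R, i⟩ (Ne.symm hi)]
          exact ih _ _ ⟨R, p⟩ h3 (Lv_null (p := ⟨R, i⟩) rf (Ne.symm hi) hz1)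
        · rw [chT_ne _ ⟨R, p⟩ hj]
          by_cases hj' : j = i
          · rw [hj', show chT z' ⟨R, i⟩ i = z' from chT_self z' ⟨R, i⟩]
            exact hzz
          · rw [chT_ne _ ⟨R, i⟩ hj']
            exact ih _ _ ⟨R, j⟩ (Lv_null (p := ⟨R, p⟩) rf hj (Lv_pred h3))
              (Lv_null (p := ⟨R, i⟩) rf hj' hz1)
    intro z z' r hz hz'
    rw [ty_succ_iff]
    exact ⟨key _ _ _ hz hz', key _ _ _ hz' hz⟩

lemma Lv_exists (rf : ∀ a, le a a) (hne : ∀ p, ∃ z, Wants le I₀ z p) (n : ℕ) :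
    ∀ (R : σ.Rel) (i j : Fin (σ.ar R)), i ≠ j → ∃ z, Lv le I₀ n z ⟨R, i⟩ := by
  induction n with
  | zero => exact fun R i _ _ => hne ⟨R, i⟩
  | succ n ih =>
    intro R i j hij
    obtain ⟨z, hz⟩ := ih R j i hij.symm
    exact ⟨_, Lv_null (p := ⟨R, j⟩) rf hij hz⟩


def Tk (le : σ.Pos → σ.Pos → Prop) (I₀ : Inst σ ℕ) (k : ℕ) : Inst σ (Ty σ k) :=
  {F | ∃ F₀ ∈ Mi le I₀, F = mapF (ty (Mi le I₀) k) F₀}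

open Classical in
noncomputable def hmT (J : Inst σ ℕ) (p : σ.Pos) (b : ℕ) : Fin (σ.ar p.1) → ℕ :=
  if h : occursAt J p b then h.choose else fun _ => 0

open Classical in
noncomputable def hm (J : Inst σ ℕ) : CEl σ → ℕ
  | .base a => a
  | .null x p r => if e : r.1 = p.1 then hmT J p (hm J x) (e ▸ r.2) else 0

lemma hmT_spec {J : Inst σ ℕ} {p : σ.Pos} {b : ℕ} (h : occursAt J p b) :
    (⟨p.1, hmT J p b⟩ : Fact σ ℕ) ∈ J ∧ hmT J p b p.2 = b := by
  simp only [hmT, h, dif_pos]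
  exact h.choose_spec

lemma hm_wants {J : Inst σ ℕ} (hJ : I₀ ⊆ J)
    (hU : ∀ p q a, le p q → occursAt J p a → occursAt J q a) :
    ∀ (x : CEl σ) (p : σ.Pos), Wants le I₀ x p → occursAt J p (hm J x) := by
  intro x
  induction x with
  | base a =>
    rintro p ⟨r, h1, t, h2, h3⟩
    exact hU _ _ _ h1 ⟨t, hJ h2, h3⟩
  | null x p r ih =>
    rintro q ⟨h1, h2, h3, h4⟩
    apply hU _ _ _ h4
    obtain ⟨R, i⟩ := r
    obtain ⟨R', j⟩ := p
    dsimp only at h2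
    subst h2
    refine ⟨_, (hmT_spec (ih _ h1)).1, ?_⟩
    simp [hm]

lemma hm_hom {J : Inst σ ℕ} (hJ : I₀ ⊆ J)
    (hU : ∀ p q a, le p q → occursAt J p a → occursAt J q a) :
    ∀ F ∈ Mi le I₀, mapF (hm J) F ∈ J := by
  rintro F (⟨F₀, h, rfl⟩ | ⟨x, v, hw, rfl⟩)
  · exact hJ h
  · have h := hmT_spec (hm_wants hJ hU x v hw)
    suffices hh : (fun i => hm J (chT x v i)) = hmT J v (hm J x) by
      have h1 := h.1
      rw [← hh] at h1
      exact h1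
    funext i
    by_cases hi : i = v.2
    · rw [hi, chT_self]; exact h.2.symm
    · rw [chT_ne _ _ hi]; simp [hm]

lemma berge_of_seq (q : CQ σ) (A : ℕ → Fin q.atoms.length) (x : ℕ → Fin q.nv)
    (h1 : ∀ i, ∃ a, (q.atoms.get (A i)).2 a = x i)
    (h2 : ∀ i, ∃ a, (q.atoms.get (A (i+1))).2 a = x i)
    (h3 : ∀ i, A i ≠ A (i+1)) (h4 : ∀ i, x i ≠ x (i+1)) : HasBergeCycle q := by
  classical
  have hex : ∃ d, 0 < d ∧ ∃ i, A i = A (i + d) ∨ x i = x (i + d) := by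
    obtain ⟨i, j, hij, he⟩ := Finite.exists_ne_map_eq_of_infinite A
    rcases lt_or_gt_of_ne hij with h | h
    · exact ⟨j - i, by omega, i, Or.inl (by rw [show i + (j - i) = j by omega]; exact he)⟩
    · exact ⟨i - j, by omega, j, Or.inl (by rw [show j + (i - j) = i by omega]; exact he.symm)⟩
  obtain ⟨hd0, i, hi⟩ := Nat.find_spec hex
  have hmin := fun e he => Nat.find_min (m := e) hex he
  generalize Nat.find hex = d at *
  have hd2 : 2 ≤ d := by
    by_contra hlt
    have : d = 1 := by omega
    subst this
    rcases hi with hi | hi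
    · exact h3 _ hi
    · exact h4 _ hi
  obtain ⟨m, rfl⟩ : ∃ m, d = m + 2 := ⟨d - 2, by omega⟩
  have inj : ∀ s, (Function.Injective fun j : Fin (m+2) => A (s + j)) ∧
      (Function.Injective fun j : Fin (m+2) => x (s + j)) := by
    intro s
    have key : ∀ j j' : Fin (m+2), j < j' → ¬ (A (s + j) = A (s + j') ∨ x (s + j) = x (s + j')) := by
      intro j j' hjj he
      have hlt : (j : ℕ) < j' := hjj
      refine hmin (j' - j) (by omega) ⟨by omega, s + j, ?_⟩
      rw [show s + (j : ℕ) + (j' - j) = s + j' by omega]; exact he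
    constructor
    · intro j j' he
      rcases lt_trichotomy j j' with h | h | h
      · exact absurd (Or.inl he) (key _ _ h)
      · exact h
      · exact absurd (Or.inl he.symm) (key _ _ h)
    · intro j j' he
      rcases lt_trichotomy j j' with h | h | h
      · exact absurd (Or.inr he) (key _ _ h)
      · exact h
      · exact absurd (Or.inr he.symm) (key _ _ h)
  have succ_val : ∀ j : Fin (m+2), (((j + 1 : Fin (m+2)) : ℕ) = j + 1 ∧ (j : ℕ) + 1 < m + 2) ∨
      (((j + 1 : Fin (m+2)) : ℕ) = 0 ∧ (j : ℕ) + 1 = m + 2) := by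
    intro j
    by_cases h : (j : ℕ) + 1 < m + 2
    · left; refine ⟨?_, h⟩
      rw [Fin.val_add, Fin.val_one, Nat.mod_eq_of_lt h]
    · right
      have : (j : ℕ) + 1 = m + 2 := by omega
      refine ⟨?_, this⟩
      rw [Fin.val_add, Fin.val_one, this, Nat.mod_self]
  rcases hi with hi | hi
  · refine ⟨m, fun j => A (i + j), (inj i).1, fun j => x (i + j), (inj i).2, fun j => ⟨h1 _, ?_⟩⟩
    dsimp only
    rcases succ_val j with ⟨e, _⟩ | ⟨e, e'⟩
    · rw [e]; exact h2 (i + j)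
    · rw [e, Nat.add_zero, hi, show i + (m + 2) = i + (j : ℕ) + 1 by omega]; exact h2 (i + j)
  · refine ⟨m, fun j => A (i + 1 + j), (inj _).1, fun j => x (i + 1 + j), (inj _).2,
      fun j => ⟨h1 _, ?_⟩⟩
    dsimp only
    rcases succ_val j with ⟨e, _⟩ | ⟨e, e'⟩
    · rw [e]; exact h2 (i + 1 + j)
    · rw [e, Nat.add_zero, show i + 1 + (j : ℕ) = i + (m + 2) by omega, ← hi]; exact h2 i

lemma leaf (q : CQ σ) (hq : ¬ HasBergeCycle q) (S : Finset (Fin q.atoms.length))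
    (hS : S.Nonempty) : ∃ A ∈ S, ∀ i j,
      (∃ B ∈ S, B ≠ A ∧ ∃ b, (q.atoms.get B).2 b = (q.atoms.get A).2 i) →
      (∃ B ∈ S, B ≠ A ∧ ∃ b, (q.atoms.get B).2 b = (q.atoms.get A).2 j) →
      (q.atoms.get A).2 i = (q.atoms.get A).2 j := by
  by_contra hcon
  push Not at hcon
  have st : ∀ s : S × Fin q.nv, ∃ s' : S × Fin q.nv, s'.1 ≠ s.1 ∧ s'.2 ≠ s.2 ∧
      (∃ a, (q.atoms.get s.1).2 a = s'.2) ∧ (∃ a, (q.atoms.get s'.1).2 a = s'.2) := by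
    rintro ⟨⟨A, hA⟩, v⟩
    obtain ⟨i, j, ⟨B, hB, hBA, b, hb⟩, ⟨B', hB', hBA', b', hb'⟩, hne⟩ := hcon A hA
    by_cases hv : (q.atoms.get A).2 i = v
    · exact ⟨(⟨B', hB'⟩, (q.atoms.get A).2 j), by simpa using hBA', by
        rw [← hv]; exact hne.symm, ⟨j, rfl⟩, ⟨b', hb'⟩⟩
    · exact ⟨(⟨B, hB⟩, (q.atoms.get A).2 i), by simpa using hBA, hv, ⟨i, rfl⟩, ⟨b, hb⟩⟩
  choose nx n1 n2 n3 n4 using st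
  obtain ⟨A0, hA0⟩ := hS
  have v0 : Fin q.nv := (q.atoms.get A0).2 ⟨0, σ.ar_pos _⟩
  let s : ℕ → S × Fin q.nv := fun n => Nat.rec (⟨A0, hA0⟩, v0) (fun _ s => nx s) n
  refine hq (berge_of_seq q (fun n => (s n).1) (fun n => (s (n+1)).2) (fun i => n3 (s i))
    (fun i => n4 (s i)) (fun i h => n1 (s i) (Subtype.ext h).symm) (fun i h => n2 (s (i+1)) h.symm))

def Rl (M : Inst σ (CEl σ)) (k n : ℕ) (z : CEl σ) (t : Ty σ k) : Prop :=
  ∃ z0, t = ty M k z0 ∧ ty M n z = ty M n z0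

lemma lift_query (q : CQ σ) (hq : IsACQ q) (k : ℕ) (g : Fin q.nv → Ty σ k)
    (hg : ∀ A ∈ q.atoms, mapF g A ∈ Tk le I₀ k) :
    ∀ n, ∀ S : Finset (Fin q.atoms.length), S.card = n → n ≤ k →
    ∃ f : Fin q.nv → CEl σ, (∀ A ∈ S, mapF f (q.atoms.get A) ∈ Mi le I₀) ∧
      ∀ A ∈ S, ∀ i, Rl (Mi le I₀) k (k - n) (f ((q.atoms.get A).2 i)) (g ((q.atoms.get A).2 i)) := by
  classical
  intro n
  induction n with
  | zero =>
    intro S hS _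
    rw [Finset.card_eq_zero] at hS
    subst hS
    exact ⟨fun _ => .base 0, by simp, by simp⟩
  | succ n ih =>
    intro S hS hn
    obtain ⟨A, hA, hleaf⟩ := leaf q hq.1 S (Finset.card_pos.1 (by omega))
    obtain ⟨f', hf1, hf2⟩ := ih (S.erase A) (by rw [Finset.card_erase_of_mem hA]; omega) (by omega)
    have hinj := hq.2 (q.atoms.get A) (List.get_mem _ _)
    have hT := hg (q.atoms.get A) (List.get_mem _ _)
    have hkn : k - n = (k - (n+1)) + 1 := by omega
    generalize hFA : q.atoms.get A = FA at *
    obtain ⟨R, vA⟩ := FA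
    dsimp only at *
    have ht' : ∃ t' : Fin (σ.ar R) → CEl σ, (⟨R, t'⟩ : Fact σ (CEl σ)) ∈ Mi le I₀ ∧
        (∀ j, Rl (Mi le I₀) k (k - (n+1)) (t' j) (g (vA j))) ∧
        ∀ j, (∃ B ∈ S, B ≠ A ∧ ∃ b, (q.atoms.get B).2 b = vA j) → t' j = f' (vA j) := by
      obtain ⟨⟨R0, t0⟩, hF0, he⟩ := hT
      cases congrArg Sigma.fst he
      have he2 : ∀ j, g (vA j) = ty (Mi le I₀) k (t0 j) := by
        have := eq_of_heq (Sigma.mk.inj he).2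
        exact fun j => congrFun this j
      by_cases hsh : ∃ i, ∃ B ∈ S, B ≠ A ∧ ∃ b, (q.atoms.get B).2 b = vA i
      · obtain ⟨i, hi⟩ := hsh
        have hR : Rl (Mi le I₀) k (k - n) (f' (vA i)) (g (vA i)) := by
          obtain ⟨B, hB, hBA, b, hb⟩ := hi
          rw [← hb]
          exact hf2 B (Finset.mem_erase.2 ⟨hBA, hB⟩) b
        obtain ⟨z0, hz0, hz1⟩ := hR
        have hz2 := ty_mono (Mi le I₀) (show k - n ≤ k by omega) _ _ (hz0.symm.trans (he2 i))
        have hz3 := hz1.trans hz2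
        rw [hkn, ty_succ_iff] at hz3
        obtain ⟨t', ht1, ht2, ht3⟩ := hz3.2 ⟨R, i⟩ t0 hF0 rfl
        refine ⟨t', ht1, fun j => ⟨t0 j, he2 j, (ht3 j).symm⟩, fun j hj => ?_⟩
        have hij := hleaf i j hi hj
        have := hinj hij
        subst this
        exact ht2
      · exact ⟨t0, hF0, fun j => ⟨t0 j, he2 j, rfl⟩, fun j hj => absurd ⟨j, hj⟩ hsh⟩
    obtain ⟨t', ht1, ht2, ht3⟩ := ht'
    let f : Fin q.nv → CEl σ := fun v => if h : ∃ j, vA j = v then t' h.choose else f' v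
    have fA : ∀ j, f (vA j) = t' j := by
      intro j
      have h : ∃ j', vA j' = vA j := ⟨j, rfl⟩
      simp only [f, dif_pos h]
      rw [hinj h.choose_spec]
    have fB : ∀ B ∈ S, B ≠ A → ∀ b, f ((q.atoms.get B).2 b) = f' ((q.atoms.get B).2 b) := by
      intro B hB hBA b
      by_cases h : ∃ j, vA j = (q.atoms.get B).2 b
      · obtain ⟨j, hj⟩ := h
        rw [← hj, fA]
        exact ht3 j ⟨B, hB, hBA, b, hj.symm⟩
      · simp only [f, dif_neg h]
    refine ⟨f, fun B hB => ?_, fun B hB i => ?_⟩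
    · by_cases hBA : B = A
      · subst hBA
        rw [hFA]
        have : mapF f (⟨R, vA⟩ : Fact σ _) = ⟨R, t'⟩ := by
          simp only [mapF]; congr 1; funext j; exact fA j
        rw [this]; exact ht1
      · have : mapF f (q.atoms.get B) = mapF f' (q.atoms.get B) := by
          simp only [mapF]; congr 1; funext j; exact fB B hB hBA j
        rw [this]; exact hf1 B (Finset.mem_erase.2 ⟨hBA, hB⟩)
    · by_cases hBA : B = A
      · subst hBA
        revert i
        rw [hFA]
        intro i
        dsimp only
        rw [fA]; exact ht2 i
      · rw [fB B hB hBA]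
        obtain ⟨z0, e1, e2⟩ := hf2 B (Finset.mem_erase.2 ⟨hBA, hB⟩) i
        exact ⟨z0, e1, ty_mono _ (by omega) _ _ e2⟩

lemma sound (k : ℕ) (I : Inst σ ℕ) (h : ℕ → Ty σ k) (hI : ∀ F ∈ I, mapF h F ∈ Tk le I₀ k)
    (q : CQ σ) (hq : IsACQ q) (hk : q.size ≤ k) (hs : satCQ I q)
    {J : Inst σ ℕ} (hJ : I₀ ⊆ J)
    (hU : ∀ p q a, le p q → occursAt J p a → occursAt J q a) : satCQ J q := by
  obtain ⟨g, hg⟩ := hs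
  obtain ⟨f, hf, -⟩ := lift_query (le := le) (I₀ := I₀) q hq k (fun v => h (g v))
    (fun A hA => hI _ (hg A hA)) _ Finset.univ rfl (by simpa [CQ.size] using hk)
  refine ⟨fun v => hm J (f v), fun A hA => ?_⟩
  obtain ⟨i, rfl⟩ := List.get_of_mem hA
  exact hm_hom hJ hU _ (hf i (Finset.mem_univ _))


def FdSat (fd : ∀ R : σ.Rel, Fin (σ.ar R) → Fin (σ.ar R) → Prop) (I : Inst σ ℕ) : Prop :=
  ∀ R i j, fd R i j → ∀ t u, (⟨R, t⟩ : Fact σ ℕ) ∈ I → (⟨R, u⟩ : Fact σ ℕ) ∈ I →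
    t i = u i → t j = u j

structure Ctx (le : σ.Pos → σ.Pos → Prop) (fd : ∀ R : σ.Rel, Fin (σ.ar R) → Fin (σ.ar R) → Prop)
    (ρ : σ.Pos → ℕ) (I₀ : Inst σ ℕ) (k : ℕ) (h : ℕ → Ty σ k) : Prop where
  rf : ∀ a, le a a
  tr : ∀ a b c, le a b → le b c → le a c
  frf : ∀ R i, fd R i i
  ftr : ∀ R i j l, fd R i j → fd R j l → fd R i l
  rle : ∀ p q, le p q → ρ p ≤ ρ q
  rle' : ∀ p q, le p q → ρ p = ρ q → le q p
  rfd : ∀ R i j, fd R i j → ρ ⟨R, j⟩ ≤ ρ ⟨R, i⟩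
  rfd' : ∀ R i j, fd R i j → ρ ⟨R, j⟩ = ρ ⟨R, i⟩ → fd R j i
  hinf : ∀ t, (h ⁻¹' {t}).Infinite
  hne : ∀ p, ∃ z, Wants le I₀ z p

structure St (le : σ.Pos → σ.Pos → Prop) (fd : ∀ R : σ.Rel, Fin (σ.ar R) → Fin (σ.ar R) → Prop)
    (I₀ : Inst σ ℕ) (k : ℕ) (h : ℕ → Ty σ k) (T : Inst σ (Ty σ k)) (I : Inst σ ℕ) : Prop where
  fin : I.Finite
  sub : I₀ ⊆ I
  hom : ∀ F ∈ I, mapF h F ∈ Tk le I₀ k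
  sat : ∀ F ∈ T, ∃ G ∈ I, mapF h G = F
  fds : FdSat fd I

lemma mem_insert_rel {R R' : σ.Rel} {N : Fin (σ.ar R) → ℕ} {t : Fin (σ.ar R') → ℕ} {I : Inst σ ℕ}
    (h : (⟨R', t⟩ : Fact σ ℕ) ∈ insert (⟨R, N⟩ : Fact σ ℕ) I) :
    (∃ e : R' = R, ∀ j : Fin (σ.ar R'), t j = N (e ▸ j)) ∨ (⟨R', t⟩ : Fact σ ℕ) ∈ I := by
  rcases h with h | h
  · cases h; exact Or.inl ⟨rfl, fun _ => rfl⟩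
  · exact Or.inr h

lemma add_occ {R : σ.Rel} {N : Fin (σ.ar R) → ℕ} {I : Inst σ ℕ} (s : σ.Pos) (a : ℕ) :
    occursAt (insert (⟨R, N⟩ : Fact σ ℕ) I) s a ↔
      occursAt I s a ∨ ∃ j, s = ⟨R, j⟩ ∧ a = N j := by
  constructor
  · rintro ⟨t, ht, rfl⟩
    obtain ⟨R', i⟩ := s
    rcases mem_insert_rel ht with ⟨e, he⟩ | h
    · dsimp only at e
      subst e
      exact Or.inr ⟨i, rfl, he i⟩
    · exact Or.inl ⟨t, h, rfl⟩
  · rintro (⟨t, ht, rfl⟩ | ⟨j, rfl, rfl⟩)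
    · exact ⟨t, Or.inr ht, rfl⟩
    · exact ⟨N, Or.inl rfl, rfl⟩

lemma add_fds {fd : ∀ R : σ.Rel, Fin (σ.ar R) → Fin (σ.ar R) → Prop}
    {R : σ.Rel} {N : Fin (σ.ar R) → ℕ} {I : Inst σ ℕ} (hI : FdSat fd I)
    (P : Fin (σ.ar R) → Prop) (hP : ∀ i j, fd R i j → P j → P i)
    (h1 : ∀ s, P s → ¬ occursAt I ⟨R, s⟩ (N s))
    (h2 : (∃ s, ¬ P s) → ∃ G, (⟨R, G⟩ : Fact σ ℕ) ∈ I ∧ ∀ s, ¬ P s → N s = G s) :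
    FdSat fd (insert (⟨R, N⟩ : Fact σ ℕ) I) := by
  have key : ∀ i j, fd R i j → ∀ t, (⟨R, t⟩ : Fact σ ℕ) ∈ I → t i = N i → t j = N j := by
    intro i j hij t ht hti
    by_cases hi : P i
    · exact absurd ⟨t, ht, hti⟩ (h1 i hi)
    · obtain ⟨G, hG, hGs⟩ := h2 ⟨i, hi⟩
      rw [hGs j (fun hj => hi (hP i j hij hj))]
      exact hI R i j hij t G ht hG (hti.trans (hGs i hi))
  intro R' i j hij t u ht hu htu
  rcases mem_insert_rel ht with ⟨e, he⟩ | ht2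
  · subst e
    rcases mem_insert_rel hu with ⟨e, he'⟩ | hu2
    · rw [he, he']
    · rw [he] at htu ⊢
      exact (key i j hij u hu2 htu.symm).symm
  · rcases mem_insert_rel hu with ⟨e, he'⟩ | hu2
    · subst e
      rw [he'] at htu ⊢
      exact key i j hij t ht2 htu
    · exact hI R' i j hij t u ht2 hu2 htu

lemma occ_fin {I : Inst σ ℕ} (hI : I.Finite) : {a | ∃ p, occursAt I p a}.Finite := by
  have : {a | ∃ p, occursAt I p a} ⊆ ⋃ F ∈ I, Set.range F.2 := by
    rintro a ⟨p, t, ht, rfl⟩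
    simp only [Set.mem_iUnion]
    exact ⟨⟨p.1, t⟩, ht, p.2, rfl⟩
  exact (hI.biUnion fun F _ => Set.finite_range _).subset this

lemma occ_fin' {I : Inst σ ℕ} (hI : I.Finite) (p : σ.Pos) : {a | occursAt I p a}.Finite :=
  (occ_fin hI).subset fun _ h => ⟨p, h⟩

variable {fd : ∀ R : σ.Rel, Fin (σ.ar R) → Fin (σ.ar R) → Prop} {ρ : σ.Pos → ℕ} {k : ℕ}
  {h : ℕ → Ty σ k}

lemma fresh (C : Ctx le fd ρ I₀ k h) {B : Set ℕ} (hB : B.Finite) (t : Ty σ k) :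
    ∃ y, h y = t ∧ y ∉ B := by
  obtain ⟨y, h1, h2⟩ := ((C.hinf t).sdiff hB).nonempty
  exact ⟨y, h1, h2⟩

lemma init_state (C : Ctx le fd ρ I₀ k h) (h0 : I₀.Finite) (hf : FdSat fd I₀)
    (hh : ∀ F ∈ I₀, mapF h F ∈ Tk le I₀ k) : ∃ I, St le fd I₀ k h (Tk le I₀ k) I := by
  have hfinT : (Tk le I₀ k).Finite := Set.toFinite _
  have key : ∀ T' : Set (Fact σ (Ty σ k)), T'.Finite → T' ⊆ Tk le I₀ k →
      ∃ I, St le fd I₀ k h T' I := by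
    intro T' hT'
    induction T', hT' using Set.Finite.induction_on with
    | empty => exact fun _ => ⟨I₀, h0, le_rfl, hh, by simp, hf⟩
    | @insert F T' _ _ ih =>
      intro hsub
      obtain ⟨I, hI⟩ := ih ((Set.subset_insert _ _).trans hsub)
      obtain ⟨R, u⟩ := F
      choose y hy1 hy2 using fun j => fresh C (occ_fin hI.fin) (u j)
      have hm : mapF h (⟨R, y⟩ : Fact σ ℕ) = ⟨R, u⟩ := by
        simp only [mapF]; congr 1; funext j; exact hy1 j
      refine ⟨insert ⟨R, y⟩ I, hI.fin.insert _, hI.sub.trans (Set.subset_insert _ _), ?_, ?_, ?_⟩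
      · rintro F (rfl | hF)
        · rw [hm]; exact hsub (Set.mem_insert _ _)
        · exact hI.hom F hF
      · rintro F (rfl | hF)
        · exact ⟨_, Set.mem_insert _ _, hm⟩
        · obtain ⟨G, hG, e⟩ := hI.sat F hF
          exact ⟨G, Or.inr hG, e⟩
      · exact add_fds hI.fds (fun _ => True) (by simp) (fun s _ ho => hy2 s ⟨_, ho⟩) (by simp)
  exact key _ hfinT le_rfl

lemma add_op (C : Ctx le fd ρ I₀ k h) {I : Inst σ ℕ} (hI : St le fd I₀ k h (Tk le I₀ k) I)
    {R : σ.Rel} {i : Fin (σ.ar R)} {ℓ : ℕ} (hℓ : ρ ⟨R, i⟩ = ℓ) {u : Fin (σ.ar R) → Ty σ k}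
    (hu : (⟨R, u⟩ : Fact σ (Ty σ k)) ∈ Tk le I₀ k) (y : Fin (σ.ar R) → ℕ)
    (hy : ∀ j, fd R j i → ρ ⟨R, j⟩ = ℓ → ¬ occursAt I ⟨R, j⟩ (y j) ∧ h (y j) = u j) :
    ∃ I', St le fd I₀ k h (Tk le I₀ k) I' ∧ I ⊆ I' ∧ ∀ s a, ρ s ≤ ℓ →
      (occursAt I' s a ↔ occursAt I s a ∨ ∃ j, s = ⟨R, j⟩ ∧ fd R j i ∧ a = y j) := by
  classical
  obtain ⟨⟨R0, G⟩, hG, hGe⟩ := hI.sat _ hu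
  cases congrArg Sigma.fst hGe
  have hG2 : ∀ j, h (G j) = u j := by
    have := eq_of_heq (Sigma.mk.inj hGe).2
    exact fun j => congrFun this j
  choose w hw1 hw2 using fun j => fresh C (occ_fin' hI.fin ⟨R, j⟩) (u j)
  let N : Fin (σ.ar R) → ℕ := fun j =>
    if fd R j i then (if ρ ⟨R, j⟩ = ℓ then y j else w j) else G j
  have hm : mapF h (⟨R, N⟩ : Fact σ ℕ) = ⟨R, u⟩ := by
    simp only [mapF]; congr 1; funext j
    simp only [N]
    split_ifs with a b
    · exact (hy j a b).2
    · exact hw1 j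
    · exact hG2 j
  refine ⟨insert ⟨R, N⟩ I, ⟨hI.fin.insert _, hI.sub.trans (Set.subset_insert _ _), ?_, ?_, ?_⟩,
    Set.subset_insert _ _, ?_⟩
  · rintro F (rfl | hF)
    · rw [hm]; exact hu
    · exact hI.hom F hF
  · intro F hF
    obtain ⟨G, hG, e⟩ := hI.sat F hF
    exact ⟨G, Or.inr hG, e⟩
  · refine add_fds hI.fds (fun j => fd R j i) (fun a b hab hb => C.ftr _ _ _ _ hab hb) ?_
      (fun _ => ⟨G, hG, fun s hs => by simp [N, hs]⟩)
    intro s hs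
    simp only [N, if_pos hs]
    split_ifs with b
    · exact (hy s hs b).1
    · exact hw2 s
  · intro s a hs
    rw [add_occ]
    constructor
    · rintro (ho | ⟨j, rfl, rfl⟩)
      · exact Or.inl ho
      · by_cases hj : fd R j i
        · have : ρ ⟨R, j⟩ = ℓ := le_antisymm hs (hℓ ▸ C.rfd _ _ _ hj)
          exact Or.inr ⟨j, rfl, hj, by simp [N, hj, this]⟩
        · exact Or.inl ⟨G, hG, by simp [N, hj]⟩
    · rintro (ho | ⟨j, rfl, hj, rfl⟩)
      · exact Or.inl ho
      · have : ρ ⟨R, j⟩ = ℓ := le_antisymm hs (hℓ ▸ C.rfd _ _ _ hj)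
        exact Or.inr ⟨j, rfl, by simp [N, hj, this]⟩

def Low (le : σ.Pos → σ.Pos → Prop) (ρ : σ.Pos → ℕ) (ℓ : ℕ) (I : Inst σ ℕ) : Prop :=
  ∀ r p x, le r p → ρ p < ℓ → occursAt I r x → occursAt I p x

lemma occ_mono {I I' : Inst σ ℕ} (hs : I ⊆ I') {p : σ.Pos} {x : ℕ} (ho : occursAt I p x) :
    occursAt I' p x := by
  obtain ⟨t, ht, e⟩ := ho
  exact ⟨t, hs ht, e⟩

lemma low_add (C : Ctx le fd ρ I₀ k h) {I I' : Inst σ ℕ} (hs : I ⊆ I')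
    {R : σ.Rel} {i : Fin (σ.ar R)} {ℓ : ℕ} (hℓ : ρ ⟨R, i⟩ = ℓ) {y : Fin (σ.ar R) → ℕ}
    (ho : ∀ s a, ρ s ≤ ℓ →
      (occursAt I' s a ↔ occursAt I s a ∨ ∃ j, s = ⟨R, j⟩ ∧ fd R j i ∧ a = y j))
    (hl : Low le ρ ℓ I) : Low le ρ ℓ I' := by
  intro r p x hrp hp hx
  have hr := C.rle _ _ hrp
  rcases (ho r x (by omega)).1 hx with h1 | ⟨j, rfl, hj, -⟩
  · exact occ_mono hs (hl r p x hrp hp h1)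
  · have := C.rfd _ _ _ hj
    omega

lemma mem_Tk_chT (k : ℕ) {z : CEl σ} {v : σ.Pos} (hz : Wants le I₀ z v) :
    (⟨v.1, fun j => ty (Mi le I₀) k (chT z v j)⟩ : Fact σ (Ty σ k)) ∈ Tk le I₀ k :=
  ⟨_, chT_mem hz, rfl⟩

def Dfc (le : σ.Pos → σ.Pos → Prop) (ρ : σ.Pos → ℕ) (ℓ : ℕ) (I : Inst σ ℕ) : Set (ℕ × σ.Pos) :=
  {w | ρ w.2 = ℓ ∧ (∃ r, le r w.2 ∧ occursAt I r w.1) ∧ ¬ occursAt I w.2 w.1}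

def Gd (le : σ.Pos → σ.Pos → Prop) (I₀ : Inst σ ℕ) (k : ℕ) (h : ℕ → Ty σ k) (n : ℕ)
    (w : ℕ × σ.Pos) : Prop := ∃ z, h w.1 = ty (Mi le I₀) k z ∧ Lv le I₀ n z w.2

lemma Dfc_fin {ℓ : ℕ} {I : Inst σ ℕ} (hI : I.Finite) : (Dfc le ρ ℓ I).Finite :=
  ((occ_fin hI).prod (Set.toFinite (Set.univ : Set σ.Pos))).subset
    (fun _ hw => ⟨⟨_, hw.2.1.choose_spec.2⟩, trivial⟩)

lemma phaseA (C : Ctx le fd ρ I₀ k h) (ℓ n : ℕ) : ∀ (m : ℕ) (I : Inst σ ℕ),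
    St le fd I₀ k h (Tk le I₀ k) I → Low le ρ ℓ I → (∀ w ∈ Dfc le ρ ℓ I, Gd le I₀ k h n w) →
    {w ∈ Dfc le ρ ℓ I | ¬ Gd le I₀ k h (n+1) w}.ncard = m →
    ∃ I', St le fd I₀ k h (Tk le I₀ k) I' ∧ Low le ρ ℓ I' ∧
      (∀ w ∈ Dfc le ρ ℓ I', Gd le I₀ k h (n+1) w) := by
  classical
  intro m
  induction m using Nat.strong_induction_on with
  | _ m ih =>
  intro I hI hl hg hm
  by_cases hb : ∀ w ∈ Dfc le ρ ℓ I, Gd le I₀ k h (n+1) w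
  · exact ⟨I, hI, hl, hb⟩
  push Not at hb
  obtain ⟨⟨x, ⟨R, i⟩⟩, hw, hbad⟩ := hb
  obtain ⟨z, hz1, hz2⟩ := hg _ hw
  have hw' := hw
  obtain ⟨hρ, ⟨r, hr1, hr2⟩, hno⟩ := hw'
  dsimp only at *
  let u : Fin (σ.ar R) → Ty σ k := fun j => ty (Mi le I₀) k (chT z ⟨R, i⟩ j)
  choose w hw1 hw2 using fun j => fresh C (occ_fin' hI.fin ⟨R, j⟩) (u j)
  let y : Fin (σ.ar R) → ℕ := fun j => if j = i then x else w j
  obtain ⟨I', hI', hsub, hocc⟩ := add_op C hI hρ (u := u)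
    (mem_Tk_chT k (v := ⟨R, i⟩) (Lv_wants hz2)) y (by
      intro j _ _
      by_cases hj : j = i
      · subst hj
        have : u j = ty (Mi le I₀) k z := congrArg _ (chT_self z ⟨R, j⟩)
        simp only [y, if_true]
        exact ⟨hno, by rw [this]; exact hz1⟩
      · simp only [y, if_neg hj]
        exact ⟨hw2 j, hw1 j⟩)
  have hD : ∀ v ∈ Dfc le ρ ℓ I', (v ∈ Dfc le ρ ℓ I ∧ v ≠ (x, ⟨R, i⟩)) ∨ Gd le I₀ k h (n+1) v := by
    rintro ⟨x', p'⟩ ⟨hp', ⟨r', hr1', hr2'⟩, hno'⟩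
    dsimp only at *
    have hnold : ¬ occursAt I p' x' := fun ho => hno' (occ_mono hsub ho)
    have hneq : ((x', p') : ℕ × σ.Pos) ≠ (x, ⟨R, i⟩) := by
      intro e
      injection e with e1 e2
      subst e1 e2
      exact hno' ((hocc _ _ hp'.le).2 (Or.inr ⟨i, rfl, C.frf _ _, by simp [y]⟩))
    have hrl : ρ r' ≤ ℓ := hp' ▸ C.rle _ _ hr1'
    rcases (hocc _ _ hrl).1 hr2' with ho | ⟨j, rfl, hj, rfl⟩
    · exact Or.inl ⟨⟨hp', ⟨r', hr1', ho⟩, hnold⟩, hneq⟩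
    · by_cases hji : j = i
      · subst hji
        have hyx : y j = x := by simp [y]
        rw [hyx] at hnold hneq ⊢
        exact Or.inl ⟨⟨hp', ⟨r, C.tr _ _ _ hr1 hr1', hr2⟩, hnold⟩, hneq⟩
      · right
        have hlj : ρ ⟨R, j⟩ = ℓ := le_antisymm hrl (hρ ▸ C.rfd _ _ _ hj)
        refine ⟨.null z ⟨R, i⟩ ⟨R, j⟩, ?_, ?_⟩
        · simp only [y, if_neg hji]
          rw [hw1 j]
          exact congrArg _ (chT_ne z ⟨R, i⟩ hji)
        · exact Lv_equiv C.tr (Lv_null (p := ⟨R, i⟩) C.rf hji hz2) hr1'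
            (C.rle' _ _ hr1' (hlj.trans hp'.symm))
  refine ih _ ?_ I' hI' (low_add C hsub hρ hocc hl) ?_ rfl
  · rw [← hm]
    apply Set.ncard_lt_ncard _ ((Dfc_fin hI.fin).subset (fun _ h => h.1))
    refine ⟨fun v hv => ?_, fun hss => ?_⟩
    · rcases hD v hv.1 with h1 | h1
      · exact ⟨h1.1, hv.2⟩
      · exact absurd h1 hv.2
    · have := hss ⟨hw, hbad⟩
      rcases hD _ this.1 with h1 | h1
      · exact h1.2 rfl
      · exact this.2 h1
  · intro v hv
    rcases hD v hv with h1 | ⟨z', h1, h2⟩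
    · exact hg _ h1.1
    · exact ⟨z', h1, Lv_pred h2⟩

lemma phaseA_all (C : Ctx le fd ρ I₀ k h) (ℓ : ℕ) (n : ℕ) {I : Inst σ ℕ}
    (hI : St le fd I₀ k h (Tk le I₀ k) I) (hl : Low le ρ ℓ I) :
    ∃ I', St le fd I₀ k h (Tk le I₀ k) I' ∧ Low le ρ ℓ I' ∧
      (∀ w ∈ Dfc le ρ ℓ I', Gd le I₀ k h n w) := by
  induction n with
  | zero =>
    refine ⟨I, hI, hl, ?_⟩
    rintro ⟨x, p⟩ ⟨hp, ⟨r, hr, t, ht, hx⟩, hno⟩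
    obtain ⟨⟨R0, t0⟩, h1, h2⟩ := hI.hom _ ht
    obtain ⟨R, i⟩ := r
    cases congrArg Sigma.fst h2
    have h3 : ∀ j, h (t j) = ty (Mi le I₀) k (t0 j) := by
      have := eq_of_heq (Sigma.mk.inj h2).2
      exact fun j => congrFun this j
    refine ⟨t0 i, ?_, ?_⟩
    · dsimp only at *
      rw [← hx]; exact h3 i
    · exact wants_up C.tr (occ_wants (p := ⟨_, i⟩) C.rf h1) hr
  | succ n ih =>
    obtain ⟨I', h1, h2, h3⟩ := ih
    exact phaseA C ℓ n _ I' h1 h2 h3 rfl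


lemma card_le {I : Inst σ ℕ} (hI : I.Finite) (hf : FdSat fd I) {R : σ.Rel} {i j : Fin (σ.ar R)}
    (hij : fd R i j) : {a | occursAt I ⟨R, j⟩ a}.ncard ≤ {a | occursAt I ⟨R, i⟩ a}.ncard := by
  have key : ∀ a : ℕ, ∃ b, occursAt I ⟨R, j⟩ a → ∃ t, (⟨R, t⟩ : Fact σ ℕ) ∈ I ∧ t j = a ∧ t i = b := by
    intro a
    by_cases ha : occursAt I ⟨R, j⟩ a
    · obtain ⟨t, ht, e⟩ := ha
      exact ⟨t i, fun _ => ⟨t, ht, e, rfl⟩⟩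
    · exact ⟨0, fun h => absurd h ha⟩
  choose f hf' using key
  refine Set.ncard_le_ncard_of_injOn f ?_ ?_ (occ_fin' hI _)
  · intro a ha
    obtain ⟨t, ht, e1, e2⟩ := hf' a ha
    exact ⟨t, ht, e2⟩
  · intro a ha b hb hab
    obtain ⟨t, ht, e1, e2⟩ := hf' a ha
    obtain ⟨u, hu, e3, e4⟩ := hf' b hb
    rw [← e1, ← e3]
    exact hf R i j hij t u ht hu (by rw [e2, e4, hab])

def GdB (le : σ.Pos → σ.Pos → Prop) (I₀ : Inst σ ℕ) (k : ℕ) (h : ℕ → Ty σ k)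
    (x : ℕ) (p : σ.Pos) : Prop :=
  ∃ z, h x = ty (Mi le I₀) k z ∧ Wants le I₀ z p ∧
    ((∃ z', Lv le I₀ (k+1) z' p) → Lv le I₀ (k+1) z p)

lemma phaseB (C : Ctx le fd ρ I₀ k h) (ℓ N : ℕ) (D : σ.Pos → Finset ℕ)
    (hcard : ∀ p, ρ p = ℓ → (D p).card = N)
    (hDeq : ∀ p q, ρ p = ℓ → ρ q = ℓ → le p q → D p ⊆ D q) : ∀ (m : ℕ) (I : Inst σ ℕ),
    St le fd I₀ k h (Tk le I₀ k) I → Low le ρ ℓ I →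
    (∀ p x, ρ p = ℓ → x ∈ D p → ¬ occursAt I p x → GdB le I₀ k h x p) →
    (∀ r p x, ρ p = ℓ → le r p → occursAt I r x → x ∈ D p) →
    {w : ℕ × σ.Pos | ρ w.2 = ℓ ∧ w.1 ∈ D w.2 ∧ ¬ occursAt I w.2 w.1}.ncard = m →
    ∃ I', St le fd I₀ k h (Tk le I₀ k) I' ∧ Low le ρ (ℓ+1) I' := by
  classical
  intro m
  induction m using Nat.strong_induction_on with
  | _ m ih =>
  intro I hI hl hg hE hm
  by_cases hb : ∀ p x, ρ p = ℓ → x ∈ D p → occursAt I p x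
  · refine ⟨I, hI, fun r p x hrp hp hx => ?_⟩
    rcases Nat.lt_succ_iff_lt_or_eq.1 hp with h1 | h1
    · exact hl r p x hrp h1 hx
    · exact hb p x h1 (hE r p x h1 hrp hx)
  push Not at hb
  obtain ⟨⟨R, i⟩, x, hρ, hxD, hno⟩ := hb
  have hset : ∀ p, ρ p = ℓ → {a | occursAt I p a} ⊆ (D p : Set ℕ) :=
    fun p hp a ha => hE p p a hp (C.rf p) ha
  have hlt : {a | occursAt I ⟨R, i⟩ a}.ncard < N := by
    rw [← hcard _ hρ, ← Set.ncard_coe_finset]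
    exact Set.ncard_lt_ncard ⟨hset _ hρ, fun hs => hno (hs hxD)⟩ (Finset.finite_toSet _)
  have hex : ∀ j, ∃ y, (j = i → y = x) ∧ (fd R j i → ρ ⟨R, j⟩ = ℓ →
      y ∈ D ⟨R, j⟩ ∧ ¬ occursAt I ⟨R, j⟩ y) := by
    intro j
    by_cases hji : j = i
    · subst hji
      exact ⟨x, fun _ => rfl, fun _ _ => ⟨hxD, hno⟩⟩
    by_cases hj : fd R j i ∧ ρ ⟨R, j⟩ = ℓ
    · have hc := card_le hI.fin hI.fds (C.rfd' _ _ _ hj.1 (hρ.trans hj.2.symm))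
      have : ¬ ((D ⟨R, j⟩ : Set ℕ) ⊆ {a | occursAt I ⟨R, j⟩ a}) := by
        intro hs
        have := Set.ncard_le_ncard hs (occ_fin' hI.fin _)
        rw [Set.ncard_coe_finset, hcard _ hj.2] at this
        omega
      obtain ⟨y, h1, h2⟩ := Set.not_subset.1 this
      exact ⟨y, fun e => absurd e hji, fun _ _ => ⟨h1, h2⟩⟩
    · exact ⟨0, fun e => absurd e hji, fun h1 h2 => absurd ⟨h1, h2⟩ hj⟩
  choose y hyi hy using hex
  have hyx : y i = x := hyi i rfl
  obtain ⟨z, hz1, hz2, hz3⟩ := hg _ _ hρ hxD hno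
  obtain ⟨I', hI', hsub, hocc⟩ := add_op C hI hρ
    (u := fun j => ty (Mi le I₀) k (chT z ⟨R, i⟩ j))
    (mem_Tk_chT k (v := ⟨R, i⟩) hz2) y (by
      intro j hj hjl
      obtain ⟨hyD, hyno⟩ := hy j hj hjl
      refine ⟨hyno, ?_⟩
      by_cases hji : j = i
      · subst hji
        rw [hyx, hz1]
        exact (congrArg _ (chT_self z ⟨R, j⟩)).symm
      · have e1 : chT z ⟨R, i⟩ j = .null z ⟨R, i⟩ ⟨R, j⟩ := chT_ne z ⟨R, i⟩ hji
        simp only [e1]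
        obtain ⟨z2, hz4, hz5, hz6⟩ := hg _ _ hjl hyD hyno
        rw [hz4]
        have hLz := hz3 (Lv_exists C.rf C.hne (k+1) R i j (Ne.symm hji))
        have hLz2 := hz6 (Lv_exists C.rf C.hne (k+1) R j i hji)
        exact Lv_ty C.rf C.tr k _ _ ⟨R, j⟩ hLz2
          (Lv_pred (Lv_null (p := ⟨R, i⟩) C.rf hji hLz)))
  have hyocc : occursAt I' ⟨R, i⟩ x :=
    (hocc _ _ hρ.le).2 (Or.inr ⟨i, rfl, C.frf _ _, hyx.symm⟩)
  refine ih _ ?_ I' hI' (low_add C hsub hρ hocc hl) ?_ ?_ rfl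
  · rw [← hm]
    have hfin : {w : ℕ × σ.Pos | ρ w.2 = ℓ ∧ w.1 ∈ D w.2 ∧ ¬ occursAt I w.2 w.1}.Finite := by
      have : (⋃ p : σ.Pos, (D p : Set ℕ)).Finite := Set.finite_iUnion fun p => (D p).finite_toSet
      refine (this.prod (Set.toFinite (Set.univ : Set σ.Pos))).subset ?_
      rintro ⟨a, p⟩ ⟨-, h1, -⟩
      exact ⟨Set.mem_iUnion.2 ⟨p, h1⟩, trivial⟩
    apply Set.ncard_lt_ncard _ hfin
    refine ⟨fun v hv => ⟨hv.1, hv.2.1, fun ho => hv.2.2 (occ_mono hsub ho)⟩, fun hss => ?_⟩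
    exact (hss (show ((x, ⟨R, i⟩) : ℕ × σ.Pos) ∈ _ from ⟨hρ, hxD, hno⟩)).2.2 hyocc
  · intro p a hp ha hna
    exact hg p a hp ha fun ho => hna (occ_mono hsub ho)
  · intro r p a hp hrp ha
    have hrl : ρ r ≤ ℓ := hp ▸ C.rle _ _ hrp
    rcases (hocc _ _ hrl).1 ha with ho | ⟨j, rfl, hj, rfl⟩
    · exact hE r p a hp hrp ho
    · have hlj : ρ ⟨R, j⟩ = ℓ := le_antisymm hrl (hρ ▸ C.rfd _ _ _ hj)
      exact hDeq _ _ hlj hp hrp (hy j hj hlj).1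

lemma balance (C : Ctx le fd ρ I₀ k h) (ℓ N : ℕ) (Q : ℕ → σ.Pos → Prop)
    (B : Set ℕ) (hB : B.Finite)
    (hQ : ∀ p q x, x ∉ B → GdB le I₀ k h x p → le p q → le q p → Q x q) :
    ∀ (m : ℕ) (D : σ.Pos → Finset ℕ),
    (∀ p, ρ p = ℓ → (D p).card ≤ N) →
    (∀ p q, ρ p = ℓ → ρ q = ℓ → le p q → D p ⊆ D q) →
    (∀ p x, ρ p = ℓ → x ∈ D p → Q x p) →
    {w : σ.Pos × Fin N | ρ w.1 = ℓ ∧ (D w.1).card ≤ w.2}.ncard = m →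
    ∃ D' : σ.Pos → Finset ℕ, (∀ p, D p ⊆ D' p) ∧ (∀ p, ρ p = ℓ → (D' p).card = N) ∧
    (∀ p q, ρ p = ℓ → ρ q = ℓ → le p q → D' p ⊆ D' q) ∧
    (∀ p x, ρ p = ℓ → x ∈ D' p → Q x p) := by
  classical
  intro m
  induction m using Nat.strong_induction_on with
  | _ m ih =>
  intro D hN hD hq hm
  by_cases hb : ∀ p, ρ p = ℓ → (D p).card = N
  · exact ⟨D, fun _ => le_rfl, hb, hD, hq⟩
  push Not at hb
  obtain ⟨p, hp, hne⟩ := hb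
  have hlt : (D p).card < N := lt_of_le_of_ne (hN p hp) hne
  have hz : ∃ z, Wants le I₀ z p ∧ ((∃ z', Lv le I₀ (k+1) z' p) → Lv le I₀ (k+1) z p) := by
    by_cases hl : ∃ z', Lv le I₀ (k+1) z' p
    · obtain ⟨z, hz⟩ := hl
      exact ⟨z, Lv_wants hz, fun _ => hz⟩
    · obtain ⟨z, hz⟩ := C.hne p
      exact ⟨z, hz, fun h => absurd h hl⟩
  obtain ⟨z, hz1, hz2⟩ := hz
  have hfinU : (⋃ p : σ.Pos, (D p : Set ℕ)).Finite := Set.finite_iUnion fun p => (D p).finite_toSet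
  obtain ⟨e, he1, he2⟩ := fresh C (hB.union hfinU) (ty (Mi le I₀) k z)
  have heB : e ∉ B := fun h => he2 (Or.inl h)
  have heD : ∀ q, e ∉ D q := fun q h => he2 (Or.inr (Set.mem_iUnion.2 ⟨q, h⟩))
  let D' : σ.Pos → Finset ℕ := fun q => if ρ q = ℓ ∧ le p q then insert e (D q) else D q
  have hDD : ∀ q, D q ⊆ D' q := by
    intro q
    simp only [D']
    split_ifs
    · exact Finset.subset_insert _ _
    · exact le_rfl
  have hpq : ∀ q, ρ q = ℓ → le p q → le q p := fun q h1 h2 => C.rle' _ _ h2 (hp.trans h1.symm)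
  have hcl : ∀ q, ρ q = ℓ → le p q → D q = D p := fun q h1 h2 =>
    Finset.Subset.antisymm (hD q p h1 hp (hpq q h1 h2)) (hD p q hp h1 h2)
  suffices hs : ∃ D2 : σ.Pos → Finset ℕ, (∀ p, D' p ⊆ D2 p) ∧ (∀ p, ρ p = ℓ → (D2 p).card = N) ∧
      (∀ p q, ρ p = ℓ → ρ q = ℓ → le p q → D2 p ⊆ D2 q) ∧
      (∀ p x, ρ p = ℓ → x ∈ D2 p → Q x p) by
    obtain ⟨D2, h1, h2, h3, h4⟩ := hs
    exact ⟨D2, fun q => (hDD q).trans (h1 q), h2, h3, h4⟩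
  refine ih {w : σ.Pos × Fin N | ρ w.1 = ℓ ∧ (D' w.1).card ≤ w.2}.ncard ?_ D' ?_ ?_ ?_ rfl
  · rw [← hm]
    apply Set.ncard_lt_ncard _ (Set.toFinite _)
    refine ⟨fun v hv => ⟨hv.1, (Finset.card_le_card (hDD _)).trans hv.2⟩, fun hss => ?_⟩
    have := (hss (show ((p, ⟨(D p).card, hlt⟩) : σ.Pos × Fin N) ∈ _ from ⟨hp, le_rfl⟩)).2
    simp only [D', hp, C.rf p, and_self, if_true, Finset.card_insert_of_notMem (heD p)] at this
    omega
  · intro q hq'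
    simp only [D']
    split_ifs with hc
    · rw [Finset.card_insert_of_notMem (heD q), hcl q hc.1 hc.2]
      exact hlt
    · exact hN q hq'
  · intro a b ha hb hab
    simp only [D']
    split_ifs with c1 c2 c2
    · exact Finset.insert_subset_insert _ (hD a b ha hb hab)
    · exact absurd ⟨hb, C.tr _ _ _ c1.2 hab⟩ c2
    · exact (hD a b ha hb hab).trans (Finset.subset_insert _ _)
    · exact hD a b ha hb hab
  · intro q x hql hx
    simp only [D'] at hx
    split_ifs at hx with hc
    · rcases Finset.mem_insert.1 hx with rfl | hx
      · exact hQ p q x heB ⟨z, he1, hz1, hz2⟩ hc.2 (hpq q hc.1 hc.2)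
      · exact hq q x hql hx
    · exact hq q x hql hx

lemma level (C : Ctx le fd ρ I₀ k h) (ℓ : ℕ) {I : Inst σ ℕ}
    (hI : St le fd I₀ k h (Tk le I₀ k) I) (hl : Low le ρ ℓ I) :
    ∃ I', St le fd I₀ k h (Tk le I₀ k) I' ∧ Low le ρ (ℓ+1) I' := by
  classical
  obtain ⟨I, hI, hl, hg⟩ := phaseA_all C ℓ (k+1) hI hl
  have hEf : ∀ p, {x | ∃ r, le r p ∧ occursAt I r x}.Finite := fun p =>
    (occ_fin hI.fin).subset fun x hx => ⟨_, hx.choose_spec.2⟩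
  let D : σ.Pos → Finset ℕ := fun p => (hEf p).toFinset
  have : Fintype σ.Pos := Fintype.ofFinite _
  let N := ∑ p, (D p).card
  have hequiv : ∀ p q x, GdB le I₀ k h x p → le p q → le q p → GdB le I₀ k h x q := by
    rintro p q x ⟨z, h1, h2, h3⟩ h4 h5
    exact ⟨z, h1, wants_up C.tr h2 h4, fun ⟨z', h6⟩ =>
      Lv_equiv C.tr (h3 ⟨z', Lv_equiv C.tr h6 h5 h4⟩) h4 h5⟩
  obtain ⟨D', h1, h2, h3, h4⟩ := balance C ℓ N
    (fun x p => occursAt I p x ∨ GdB le I₀ k h x p) ∅ Set.finite_empty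
    (fun p q x _ h4 h5 h6 => Or.inr (hequiv p q x h4 h5 h6)) _ D
    (fun p _ => Finset.single_le_sum (f := fun p => (D p).card) (fun _ _ => Nat.zero_le _)
      (Finset.mem_univ p))
    (by
      intro p q hp hq hpq x hx
      simp only [D, Set.Finite.mem_toFinset, Set.mem_ofPred_eq] at hx ⊢
      obtain ⟨r, h1, h2⟩ := hx
      exact ⟨r, C.tr _ _ _ h1 hpq, h2⟩)
    (by
      intro p x hp hx
      simp only [D, Set.Finite.mem_toFinset, Set.mem_ofPred_eq] at hx
      by_cases ho : occursAt I p x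
      · exact Or.inl ho
      · obtain ⟨z, hz1, hz2⟩ := hg (x, p) ⟨hp, hx, ho⟩
        exact Or.inr ⟨z, hz1, Lv_wants hz2, fun _ => hz2⟩) rfl
  refine phaseB C ℓ N D' h2 h3 _ I hI hl ?_ ?_ rfl
  · intro p x hp hx hno
    exact (h4 p x hp hx).resolve_left hno
  · intro r p x hp hrp ho
    apply h1
    simp only [D, Set.Finite.mem_toFinset, Set.mem_ofPred_eq]
    exact ⟨r, hrp, ho⟩

lemma construct (C : Ctx le fd ρ I₀ k h) (h0 : I₀.Finite) (hf : FdSat fd I₀)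
    (hh : ∀ F ∈ I₀, mapF h F ∈ Tk le I₀ k) :
    ∃ I, St le fd I₀ k h (Tk le I₀ k) I ∧ ∀ r p x, le r p → occursAt I r x → occursAt I p x := by
  have key : ∀ ℓ, ∃ I, St le fd I₀ k h (Tk le I₀ k) I ∧ Low le ρ ℓ I := by
    intro ℓ
    induction ℓ with
    | zero =>
      obtain ⟨I, hI⟩ := init_state C h0 hf hh
      exact ⟨I, hI, fun _ _ _ _ h => absurd h (Nat.not_lt_zero _)⟩
    | succ ℓ ih =>
      obtain ⟨I, hI, hl⟩ := ih
      exact level C ℓ hI hl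
  obtain ⟨B, hB⟩ := (Set.finite_range ρ).bddAbove
  obtain ⟨I, hI, hl⟩ := key (B + 1)
  exact ⟨I, hI, fun r p x hrp ho => hl r p x hrp (Nat.lt_succ_of_le (hB ⟨p, rfl⟩)) ho⟩


def leS (Su : Set (UID σ)) (p q : σ.Pos) : Prop := p = q ∨ ∃ τ ∈ Su, τ.src = p ∧ τ.dst = q

def fdS (Sf : Set (UFD σ)) (R : σ.Rel) (i j : Fin (σ.ar R)) : Prop :=
  i = j ∨ ∃ hne : i ≠ j, (⟨R, i, j, hne⟩ : UFD σ) ∈ Sf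

lemma leS_sat {Su : Set (UID σ)} {α : Type} {J : Inst σ α} (hJ : ∀ τ ∈ Su, satUID J τ) (p q : σ.Pos) (a : α)
    (hpq : leS Su p q) (ho : occursAt J p a) : occursAt J q a := by
  rcases hpq with rfl | ⟨τ, hτ, rfl, rfl⟩
  · exact ho
  · exact hJ τ hτ a ho

lemma fdS_sat {Sf : Set (UFD σ)} {J : Inst σ ℕ} (hJ : ∀ φ ∈ Sf, satUFD J φ) : FdSat (fdS Sf) J := by
  rintro R i j (rfl | ⟨hne, hm⟩) t u ht hu e
  · exact e
  · exact hJ _ hm t u ht hu e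

lemma leS_of {Su : Set (UID σ)} {Sf : Set (UFD σ)} (hclU : ∀ τ : UID σ, finImpUIDu Su Sf τ → τ ∈ Su)
    {p q : σ.Pos} (hh : ∀ J : Inst σ ℕ, J.Finite → satAllU J Su Sf →
      ∀ a, occursAt J p a → occursAt J q a) : leS Su p q := by
  by_cases e : p = q
  · exact Or.inl e
  · exact Or.inr ⟨⟨p, q, e⟩, hclU _ hh, rfl, rfl⟩

lemma fdS_of {Su : Set (UID σ)} {Sf : Set (UFD σ)} (hclF : ∀ φ : UFD σ, finImpUFDu Su Sf φ → φ ∈ Sf)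
    {R : σ.Rel} {i j : Fin (σ.ar R)} (hh : ∀ J : Inst σ ℕ, J.Finite → satAllU J Su Sf →
      ∀ t u, (⟨R, t⟩ : Fact σ ℕ) ∈ J → (⟨R, u⟩ : Fact σ ℕ) ∈ J → t i = u i → t j = u j) :
    fdS Sf R i j := by
  by_cases e : i = j
  · exact Or.inl e
  · exact Or.inr ⟨e, hclF _ hh⟩

def edg (Su : Set (UID σ)) (Sf : Set (UFD σ)) (p q : σ.Pos) : Prop :=
  leS Su p q ∨ ∃ R i j, fdS Sf R i j ∧ p = ⟨R, j⟩ ∧ q = ⟨R, i⟩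

noncomputable def rnk (Su : Set (UID σ)) (Sf : Set (UFD σ)) (p : σ.Pos) : ℕ :=
  {q | Relation.ReflTransGen (edg Su Sf) q p}.ncard

lemma rnk_le {Su : Set (UID σ)} {Sf : Set (UFD σ)} {p q : σ.Pos} (hpq : edg Su Sf p q) :
    rnk Su Sf p ≤ rnk Su Sf q :=
  Set.ncard_le_ncard (fun _ hr => Relation.ReflTransGen.tail hr hpq) (Set.toFinite _)

lemma rnk_eq {Su : Set (UID σ)} {Sf : Set (UFD σ)} {p q : σ.Pos} (hpq : edg Su Sf p q)
    (he : rnk Su Sf p = rnk Su Sf q) : Relation.ReflTransGen (edg Su Sf) q p := by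
  have := Set.eq_of_subset_of_ncard_le
    (s := {r | Relation.ReflTransGen (edg Su Sf) r p}) (t := {r | Relation.ReflTransGen (edg Su Sf) r q})
    (fun _ hr => Relation.ReflTransGen.tail hr hpq) he.ge (Set.toFinite _)
  have h2 : q ∈ {r | Relation.ReflTransGen (edg Su Sf) r q} := Relation.ReflTransGen.refl
  rw [← this] at h2
  exact h2

lemma edg_card {Su : Set (UID σ)} {Sf : Set (UFD σ)} {J : Inst σ ℕ} (hJ : J.Finite)
    (hs : satAllU J Su Sf) {p q : σ.Pos} (hpq : Relation.ReflTransGen (edg Su Sf) p q) :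
    {a | occursAt J p a}.ncard ≤ {a | occursAt J q a}.ncard := by
  induction hpq with
  | refl => exact le_rfl
  | tail _ h ih =>
    refine ih.trans ?_
    rcases h with h | ⟨R, i, j, h, rfl, rfl⟩
    · exact Set.ncard_le_ncard (fun a ha => leS_sat hs.1 _ _ a h ha) (occ_fin' hJ _)
    · exact card_le hJ (fdS_sat hs.2) h

lemma le_back {Su : Set (UID σ)} {Sf : Set (UFD σ)} (hclU : ∀ τ : UID σ, finImpUIDu Su Sf τ → τ ∈ Su)
    {p q : σ.Pos} (hpq : leS Su p q) (he : rnk Su Sf p = rnk Su Sf q) : leS Su q p := by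
  refine leS_of hclU fun J hJ hs a ha => ?_
  have := Set.eq_of_subset_of_ncard_le
    (s := {a | occursAt J p a}) (t := {a | occursAt J q a})
    (fun a ha => leS_sat hs.1 _ _ a hpq ha) (edg_card hJ hs (rnk_eq (Or.inl hpq) he)) (occ_fin' hJ _)
  have h2 : a ∈ {a | occursAt J q a} := ha
  rw [← this] at h2
  exact h2

lemma fd_back {Su : Set (UID σ)} {Sf : Set (UFD σ)} (hclF : ∀ φ : UFD σ, finImpUFDu Su Sf φ → φ ∈ Sf)
    {R : σ.Rel} {i j : Fin (σ.ar R)} (hij : fdS Sf R i j)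
    (he : rnk Su Sf ⟨R, j⟩ = rnk Su Sf ⟨R, i⟩) : fdS Sf R j i := by
  refine fdS_of hclF fun J hJ hs t u ht hu e => ?_
  have hf := fdS_sat hs.2
  have hc := edg_card hJ hs (rnk_eq (Or.inr ⟨R, i, j, hij, rfl, rfl⟩) he)
  have key : ∀ a : ℕ, ∃ b, occursAt J ⟨R, i⟩ a → ∃ t, (⟨R, t⟩ : Fact σ ℕ) ∈ J ∧ t i = a ∧ t j = b := by
    intro a
    by_cases ha : occursAt J ⟨R, i⟩ a
    · obtain ⟨t, ht, e⟩ := ha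
      exact ⟨t j, fun _ => ⟨t, ht, e, rfl⟩⟩
    · exact ⟨0, fun h => absurd h ha⟩
  choose f hf' using key
  have hft : ∀ t, (⟨R, t⟩ : Fact σ ℕ) ∈ J → f (t i) = t j := by
    intro t ht
    obtain ⟨v, hv, e1, e2⟩ := hf' (t i) ⟨t, ht, rfl⟩
    rw [← e2]
    exact hf R i j hij v t hv ht e1
  refine Set.inj_on_of_surj_on_of_ncard_le (s := {a | occursAt J ⟨R, i⟩ a})
    (t := {a | occursAt J ⟨R, j⟩ a}) (fun a _ => f a) ?_ ?_ hc (a₁ := t i) (a₂ := u i)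
    ⟨t, ht, rfl⟩ ⟨u, hu, rfl⟩ ?_ (occ_fin' hJ _)
  · intro a ha
    obtain ⟨v, hv, e1, e2⟩ := hf' a ha
    exact ⟨v, hv, e2⟩
  · rintro b ⟨v, hv, rfl⟩
    exact ⟨v i, ⟨v, hv, rfl⟩, hft v hv⟩
  · simp only [hft t ht, hft u hu, e]

lemma created_wants {Su : Set (UID σ)} {x : CEl σ} {p : σ.Pos} (hc : Created I₀ Su x p) :
    Wants (leS Su) I₀ x p := by
  induction hc with
  | root a p h1 h2 =>
    obtain ⟨τ, hτ, rfl, ho⟩ := h1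
    exact ⟨τ.src, Or.inr ⟨τ, hτ, rfl, rfl⟩, ho⟩
  | step x p r q h1 h2 h3 h4 ih =>
    exact ⟨ih, h2, h3, Or.inr h4⟩

lemma exists_h {T : Type} [Finite T] [Nonempty T] (S : Set ℕ) (hS : S.Finite) (f : ℕ → T) :
    ∃ h : ℕ → T, (∀ a ∈ S, h a = f a) ∧ ∀ t, (h ⁻¹' {t}).Infinite := by
  classical
  obtain ⟨e, he⟩ := Countable.exists_injective_nat T
  let g : ℕ → T := fun n => Function.invFun e (Nat.unpair n).1
  refine ⟨fun a => if a ∈ S then f a else g a, fun a ha => by simp [ha], fun t => ?_⟩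
  have h1 : (g ⁻¹' {t}).Infinite := by
    refine Set.infinite_of_injective_forall_mem (f := fun m => Nat.pair (e t) m) ?_ ?_
    · intro a b hab
      simpa using hab
    · intro m
      simp [g, Function.leftInverse_invFun he t]
  refine (h1.sdiff hS).mono ?_
  rintro a ⟨h2, h3⟩
  simpa [h3] using h2

instance instNeTy (σ : Sig) : (n : ℕ) → Nonempty (Ty σ n)
  | 0 => inferInstanceAs (Nonempty Unit)
  | _ + 1 => ⟨(∅ : Set _)⟩


end Aux

/-- **k-universal models for finitely closed UIDs and UFDs.** If `Su ∪ Sf` (UIDs and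
UFDs) is a finite set closed under finite implication (and the signature has no
useless relations: every relation occurs in the UID chase of `I₀` by `Su`), then
every finite instance `I₀` satisfying `Sf` has a finite superinstance satisfying the
constraints which is `k`-sound for them, `I₀`, and the class of acyclic Boolean CQs. -/
theorem k_universal_models_finitely_closed
    {σ : Sig} (Su : Set (UID σ)) (Sf : Set (UFD σ))
    (hSu : Su.Finite) (hSf : Sf.Finite)
    (hclU : ∀ τ : UID σ, finImpUIDu Su Sf τ → τ ∈ Su)
    (hclF : ∀ φ : UFD σ, finImpUFDu Su Sf φ → φ ∈ Sf)
    (k : ℕ) (I₀ : Inst σ ℕ) (hfin : I₀.Finite)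
    (hsat : ∀ φ ∈ Sf, satUFD I₀ φ)
    (huseful : ∀ R : σ.Rel, ∃ t : Fin (σ.ar R) → CEl σ,
        (⟨R, t⟩ : Fact σ (CEl σ)) ∈ chaseInst I₀ Su) :
    ∃ I : Inst σ ℕ, I₀ ⊆ I ∧ I.Finite ∧ satAllU I Su Sf ∧
      ∀ q : CQ σ, IsACQ q → q.size ≤ k → satCQ I q → unrEntailsU I₀ Su Sf q := by
  have hdom : (activeDom I₀).Finite := by
    refine (occ_fin hfin).subset ?_
    rintro a ⟨⟨R, t⟩, hF, i, rfl⟩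
    exact ⟨⟨R, i⟩, t, hF, rfl⟩
  obtain ⟨h, hh1, hh2⟩ := exists_h (T := Ty σ k) (activeDom I₀) hdom
    (fun a => ty (Mi (leS Su) I₀) k (.base a))
  have C : Ctx (leS Su) (fdS Sf) (rnk Su Sf) I₀ k h :=
    { rf := fun a => Or.inl rfl
      tr := fun a b c hab hbc => leS_of hclU fun J _ hs x hx =>
        leS_sat hs.1 _ _ x hbc (leS_sat hs.1 _ _ x hab hx)
      frf := fun R i => Or.inl rfl
      ftr := fun R i j l hij hjl => fdS_of hclF fun J _ hs t u ht hu e =>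
        fdS_sat hs.2 R j l hjl t u ht hu (fdS_sat hs.2 R i j hij t u ht hu e)
      rle := fun p q hpq => rnk_le (Or.inl hpq)
      rle' := fun p q hpq he => le_back hclU hpq he
      rfd := fun R i j hij => rnk_le (Or.inr ⟨R, i, j, hij, rfl, rfl⟩)
      rfd' := fun R i j hij he => fd_back hclF hij he
      hinf := hh2
      hne := by
        rintro ⟨R, i⟩
        obtain ⟨t, ht⟩ := huseful R
        refine ⟨t i, occ_wants (p := ⟨R, i⟩) (fun a => Or.inl rfl) ?_⟩
        rcases ht with ⟨F₀, hF, e⟩ | ⟨x, p, hc, e⟩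
        · exact Or.inl ⟨F₀, hF, e⟩
        · exact Or.inr ⟨x, p, created_wants hc, e⟩ }
  obtain ⟨I, hI, hle⟩ := construct C hfin (fdS_sat hsat) (by
    intro F hF
    refine ⟨mapF CEl.base F, Or.inl ⟨F, hF, rfl⟩, ?_⟩
    have : (fun i => h (F.2 i)) = fun i => ty (Mi (leS Su) I₀) k (.base (F.2 i)) :=
      funext fun i => hh1 _ ⟨F, hF, i, rfl⟩
    simp only [mapF, this])
  refine ⟨I, hI.sub, hI.fin, ⟨fun τ hτ a ha => hle _ _ a (Or.inr ⟨τ, hτ, rfl, rfl⟩) ha,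
    fun φ hφ t u ht hu e => hI.fds φ.rel φ.src φ.dst (Or.inr ⟨φ.ne, hφ⟩) t u ht hu e⟩, ?_⟩
  intro q hq hk hs J hJ hJs
  exact sound k I h hI.hom q hq hk hs hJ (fun p q a hpq ha => leS_sat hJs.1 p q a hpq ha)

end FQA
end
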